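/- Let (W,S) be a Coxeter system and let h be a reflection-stable Abe realization of W over an integral domain k. Let W′ be any reflection subgroup of W with canonical generating set S′. Then h is an Abe realization for (W′,S′): for every reflection datum for (W′,S′), with Cartan pairings a_{s′,t′} = ⟨α_{s′}∨, α_{t′}⟩, and for all distinct s′,t′ ∈ S′ such that m′ := (order of s′t′) is finite, one has binom(m′,k)_x(a_{s′,t′}, a_{t′,s′}) = 0 = binom(m′,k)_y(a_{s′,t′}, a_{t′,s′}) for all 1 ≤ k ≤ m′−1. -/

import Mathlib

/-!
Statement 12: a reflection-stable Abe realization of `(W,S)` is an Abe realization for every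
reflection subgroup `(W', S')`.
-/

attribute [local instance] Classical.propDecidable

noncomputable section

namespace PaperStmt

/-- `ℤ[x,y]`. -/
abbrev A2 : Type := MvPolynomial (Fin 2) ℤ

/-- The variable `x`. -/
def varX : A2 := MvPolynomial.X 0

/-- The variable `y`. -/
def varY : A2 := MvPolynomial.X 1

/-- The pair of two-colored quantum numbers `([n]_x, [n]_y)` for `n ∈ ℕ`. -/
def qPair : ℕ → A2 × A2
  | 0 => (0, 0)
  | 1 => (1, 1)
  | n + 2 =>
      (varX * (qPair (n + 1)).2 - (qPair n).1,
        varY * (qPair (n + 1)).1 - (qPair n).2)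

/-- The two-colored quantum number `[n]_x`, `n ∈ ℤ` (the recursions of the paper, used in both
directions, force `[-n]_x = -[n]_x`). -/
def qX (n : ℤ) : A2 := if 0 ≤ n then (qPair n.toNat).1 else -(qPair (-n).toNat).1

/-- The two-colored quantum number `[n]_y`, `n ∈ ℤ`. -/
def qY (n : ℤ) : A2 := if 0 ≤ n then (qPair n.toNat).2 else -(qPair (-n).toNat).2

/-- The `d`-twisted variable `x(d) = [d+1]_x − [d−1]_x`. -/
def twX (d : ℤ) : A2 := qX (d + 1) - qX (d - 1)

/-- The `d`-twisted variable `y(d) = [d+1]_y − [d−1]_y`. -/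
def twY (d : ℤ) : A2 := qY (d + 1) - qY (d - 1)
/-- Substitution `x ↦ x(d), y ↦ y(d)` in `ℤ[x,y]`. -/
def twist (d : ℤ) (p : A2) : A2 := MvPolynomial.aeval ![twX d, twY d] p

/-- The two-colored quantum binomial coefficient `binom(n,j)_x`: the unique element of
`ℤ[x,y]` whose product with `[1]_x [2]_x ⋯ [j]_x` is `[n]_x [n−1]_x ⋯ [n−j+1]_x`. -/
def qbinomX (n j : ℕ) : A2 :=
  if h : ∃ p : A2,
      p * ∏ i ∈ Finset.range j, qX ((i : ℤ) + 1) =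
        ∏ i ∈ Finset.range j, qX ((n : ℤ) - (i : ℤ)) then
    h.choose
  else 0

/-- The two-colored quantum binomial coefficient `binom(n,j)_y`. -/
def qbinomY (n j : ℕ) : A2 :=
  if h : ∃ p : A2,
      p * ∏ i ∈ Finset.range j, qY ((i : ℤ) + 1) =
        ∏ i ∈ Finset.range j, qY ((n : ℤ) - (i : ℤ)) then
    h.choose
  else 0

/-- Evaluation `p(a,b)` of `p ∈ ℤ[x,y]` in a commutative ring, at `x ↦ a`, `y ↦ b`. -/
def pev {k : Type*} [CommRing k] (a b : k) (p : A2) : k := MvPolynomial.aeval ![a, b] p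
variable {B W : Type*} [Group W] {M : CoxeterMatrix B}

/-- A pre-realization of the Coxeter system `cs` over `k`: a `k`-module `V` with simple
coroots in `V` and simple roots in the dual `V* = Module.Dual k V`, such that the pairing of
each simple root with its coroot is `2`, the formula `s(v) = v − ⟨v, α_s⟩ α_s∨` defines a
representation `rep` of `W` on `V`, and each simple root is surjective onto `k`
(Demazure surjectivity). -/
structure PreRealization (cs : CoxeterSystem M W) (k V : Type*)
    [CommRing k] [AddCommGroup V] [Module k V] where
  coroot : B → V
  root : B → Module.Dual k V
  rep : W →* Module.End k V
  root_coroot_eq_two : ∀ i : B, root i (coroot i) = 2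
  rep_simple : ∀ (i : B) (v : V), rep (cs.simple i) v = v - root i v • coroot i
  root_surjective : ∀ i : B, Function.Surjective ⇑(root i)

variable {k V : Type*} [CommRing k] [AddCommGroup V] [Module k V] {cs : CoxeterSystem M W}

/-- The contragredient action of `W` on the dual `V*`. -/
def dAct (R : PreRealization cs k V) (w : W) (f : Module.Dual k V) : Module.Dual k V :=
  f.comp (R.rep w⁻¹)

/-- The canonical (Deodhar–Dyer) generating set of a subset `A ⊆ W`:
`{t ∈ ℛ(W) : N(t) ∩ A = {t}}` where `N(x) = {r ∈ ℛ(W) : ℓ(xr) < ℓ(x)}`. -/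
def canonicalGens (cs : CoxeterSystem M W) (A : Set W) : Set W :=
  {t : W | cs.IsReflection t ∧
    ({r : W | cs.IsReflection r ∧ cs.length (t * r) < cs.length t} ∩ A) = {t}}

/-- `W'` is a reflection subgroup: it is generated by the reflections it contains. -/
def IsReflectionSubgroup (cs : CoxeterSystem M W) (W' : Subgroup W) : Prop :=
  W' = Subgroup.closure ((W' : Set W) ∩ {r : W | cs.IsReflection r})

/-- A reflection datum on a subset `A ⊆ W`: maps `w_•, r_•` with `t = w_t r_t w_t⁻¹` and
`ℓ(w_t r_t) > ℓ(w_t)` for all `t ∈ A`. -/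
def IsReflectionDatum (cs : CoxeterSystem M W) (A : Set W) (wm : W → W) (rm : W → B) : Prop :=
  ∀ t ∈ A, t = wm t * cs.simple (rm t) * (wm t)⁻¹ ∧
    cs.length (wm t) < cs.length (wm t * cs.simple (rm t))

/-- The root `α_t = w_t · α_{r_t}` attached to `t` by a reflection datum. -/
def datumRoot (R : PreRealization cs k V) (wm : W → W) (rm : W → B) (t : W) :
    Module.Dual k V :=
  dAct R (wm t) (R.root (rm t))

/-- The coroot `α_t∨ = w_t · α_{r_t}∨` attached to `t` by a reflection datum. -/
def datumCoroot (R : PreRealization cs k V) (wm : W → W) (rm : W → B) (t : W) : V :=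
  R.rep (wm t) (R.coroot (rm t))

/-- The Cartan pairing `a_{t,t'} = ⟨α_t∨, α_{t'}⟩` attached to a reflection datum. -/
def cartan (R : PreRealization cs k V) (wm : W → W) (rm : W → B) (t t' : W) : k :=
  datumRoot R wm rm t' (datumCoroot R wm rm t)

/-- The Cartan entry `a_{s,t} = ⟨α_s∨, α_t⟩` for simple reflections. -/
def cartanS (R : PreRealization cs k V) (s t : B) : k := R.root t (R.coroot s)
/-- `R` is a reflection-stable Abe realization: for all distinct `s, t ∈ S` with
`m = m_{s,t}` finite and every divisor `v > 1` of `m`, the `(m/v)`-twisted two-colored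
quantum binomial coefficients `binom(v,j)`, `1 ≤ j ≤ v−1`, vanish at `(a_{s,t}, a_{t,s})`. -/
def ReflectionStable (cs : CoxeterSystem M W) {k V : Type*} [CommRing k] [AddCommGroup V]
    [Module k V] (R : PreRealization cs k V) : Prop :=
  ∀ s t : B, s ≠ t → orderOf (cs.simple s * cs.simple t) ≠ 0 →
    ∀ v : ℕ, 1 < v → v ∣ orderOf (cs.simple s * cs.simple t) →
      ∀ j : ℕ, 1 ≤ j → j ≤ v - 1 →
        pev (cartanS R s t) (cartanS R t s)
            (twist ((orderOf (cs.simple s * cs.simple t) / v : ℕ) : ℤ) (qbinomX v j)) = 0 ∧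
        pev (cartanS R s t) (cartanS R t s)
            (twist ((orderOf (cs.simple s * cs.simple t) / v : ℕ) : ℤ) (qbinomY v j)) = 0


/-!
Everything is transported to the geometric representation of `W`, where every root is either
nonnegative or nonpositive. If `s', t' ∈ S'` are distinct and `s't'` has finite order `N`, the
positive roots `a, b` of `s', t'` have inner product `-cos (π / N)`: the roots in the plane of
`a, b` whose reflections lie in `W'` are nonnegative or nonpositive combinations of `a` and `b`.
The plane of `a, b` is the annihilator of a family of linear forms obtained by averaging over the
powers of `s't'`; moving these forms one after the other into the dominant chamber yields `y ∈ W`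
that carries the plane to the plane of two simple roots `α_i, α_j`, with `m_{i,j} = (e + 1) N`, and
that can be chosen to send `a` to `± α_i` and `b` to `±` the root at angle `(e + 1) π / m_{i,j}`.

In the realization `h` the equality `w α_i = α_t` of geometric roots persists up to a unit `κ` for
the roots, and up to `κ⁻¹` for the coroots, because `w` is a product of factors from rank-two
parabolic subgroups, for which this is the vanishing of `[m_{s,t}]`. Hence
`a_{s',t'} = u x(e+1)` and `a_{t',s'} = u⁻¹ y(e+1)` for a unit `u`, evaluated at
`(a_{i,j}, a_{j,i})`. Quantum binomial coefficients are homogeneous for the weights `1, -1` of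
`x, y`, so the unit does not affect their vanishing, and what remains is the hypothesis for the
divisor `N` of `m_{i,j}`.
-/

section Dihedral

open Polynomial Chebyshev

section CommRing

variable {K E : Type*} [CommRing K] [AddCommGroup E] [Module K E]

/-- The orthogonal reflection `v ↦ v - 2 Φ(a, v) a` in a vector `a` with `Φ(a, a) = 1`. -/
def unitReflection (Φ : LinearMap.BilinForm K E) (a : E) : Module.End K E :=
  Module.preReflection a ((2 : K) • Φ a)

theorem unitReflection_apply (Φ : LinearMap.BilinForm K E) (a v : E) :
    unitReflection Φ a v = v - (2 * Φ a v) • a := by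
  simp [unitReflection, Module.preReflection_apply]

theorem unitReflection_mul_self {Φ : LinearMap.BilinForm K E} {a : E} (ha : Φ a a = 1) :
    unitReflection Φ a * unitReflection Φ a = 1 :=
  LinearMap.ext (Module.involutive_preReflection (by simp [ha]))

/-- Two vectors of norm one meeting at the angle with cosine `-c`, as two simple roots do. -/
structure IsUnitPair (Φ : LinearMap.BilinForm K E) (c : K) (a b : E) : Prop where
  left_self : Φ a a = 1
  right_self : Φ b b = 1
  left_right : Φ a b = -c
  right_left : Φ b a = -c

/-- For a unit pair `a, b` these are the vectors `a, s_b a, s_b s_a b, …` up to the order of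
`a` and `b`, continued to negative indices: consecutive ones differ by one reflection. -/
def dihedralVec (c : K) (a b : E) (n : ℤ) : E :=
  (U K n).eval c • a + (U K (n - 1)).eval c • b

@[simp]
theorem dihedralVec_zero (c : K) (a b : E) : dihedralVec c a b 0 = a := by
  simp [dihedralVec]

theorem dihedralVec_neg_sub_one (c : K) (a b : E) (n : ℤ) :
    dihedralVec c a b (-n - 1) = -dihedralVec c b a n := by
  have h : -n - 1 - 1 = -n - 2 := by ring
  simp only [dihedralVec, h, U_neg_sub_one, U_neg_sub_two, eval_neg, neg_smul]
  abel

theorem dihedralVec_neg_one (c : K) (a b : E) : dihedralVec c a b (-1) = -b := by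
  simpa using dihedralVec_neg_sub_one c a b 0

namespace IsUnitPair

variable {Φ : LinearMap.BilinForm K E} {c : K} {a b : E}

theorem symm (h : IsUnitPair Φ c a b) : IsUnitPair Φ c b a :=
  ⟨h.right_self, h.left_self, h.right_left, h.left_right⟩

theorem reflection_right_dihedralVec (h : IsUnitPair Φ c a b) (n : ℤ) :
    unitReflection Φ b (dihedralVec c a b n) = dihedralVec c b a (n + 1) := by
  have hU : (U K (n + 1)).eval c = 2 * c * (U K n).eval c - (U K (n - 1)).eval c := by
    simp [U_add_one]
  simp only [unitReflection_apply, dihedralVec, map_add, map_smul, h.right_left, h.right_self,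
    add_sub_cancel_right, hU]
  module

theorem reflection_left_dihedralVec (h : IsUnitPair Φ c a b) (n : ℤ) :
    unitReflection Φ a (dihedralVec c a b n) = dihedralVec c b a (n - 1) := by
  have key := h.symm.reflection_right_dihedralVec (-n - 1)
  rw [dihedralVec_neg_sub_one, show -n - 1 + 1 = -(n - 1) - 1 by ring, dihedralVec_neg_sub_one,
    map_neg, neg_inj] at key
  exact key

theorem rotation_pow_dihedralVec (h : IsUnitPair Φ c a b) (m : ℕ) (n : ℤ) :
    ((unitReflection Φ a * unitReflection Φ b) ^ m) (dihedralVec c a b n) =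
      dihedralVec c a b (n + 2 * m) := by
  induction m generalizing n with
  | zero => simp
  | succ m ih =>
    rw [pow_succ, Module.End.mul_apply, Module.End.mul_apply, h.reflection_right_dihedralVec,
      h.symm.reflection_right_dihedralVec, ih]
    congr 1
    push_cast
    ring

theorem form_left_dihedralVec (h : IsUnitPair Φ c a b) (n : ℤ) :
    Φ a (dihedralVec c a b n) = (T K n).eval c := by
  simp [dihedralVec, h.left_self, h.left_right, T_eq_U_sub_X_mul_U]
  ring

/-- Pairing with `a` reads off the rotation angle. -/
theorem eval_T_eq_one_of_rotation_pow_eq_one (h : IsUnitPair Φ c a b) {n : ℕ}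
    (hn : (unitReflection Φ a * unitReflection Φ b) ^ n = 1) : (T K (2 * n)).eval c = 1 := by
  have key := h.rotation_pow_dihedralVec n 0
  rw [hn, dihedralVec_zero, Module.End.one_apply, zero_add] at key
  rw [← h.form_left_dihedralVec, ← key, h.left_self]

end IsUnitPair

theorem eq_or_eq_neg_of_form_self_eq_one [IsDomain K] {Φ : LinearMap.BilinForm K E} {a b : E}
    (ha : Φ a a = 1) (hb : Φ b b = 1) {μ : K} (h : b = μ • a) : b = a ∨ b = -a := by
  have hμ : μ * μ = 1 := by simpa [h, ha] using hb
  rcases mul_self_eq_one_iff.mp hμ with rfl | rfl <;> simp [h]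

theorem eq_or_eq_neg_of_unitReflection_eq [IsDomain K] (h2 : (2 : K) ≠ 0)
    {Φ : LinearMap.BilinForm K E} [Module.IsTorsionFree K E] {a b : E} (ha : Φ a a = 1)
    (hb : Φ b b = 1) (h : unitReflection Φ a = unitReflection Φ b) : b = a ∨ b = -a := by
  have key := congrArg (· b) h
  simp only [unitReflection_apply, hb] at key
  refine eq_or_eq_neg_of_form_self_eq_one ha hb (μ := Φ a b) (smul_right_injective E h2 ?_)
  simpa [mul_smul] using key.symm

end CommRing

section Real

variable {E : Type*} [AddCommGroup E] [Module ℝ E]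

theorem sin_pi_div_pos {N : ℕ} (hN : 2 ≤ N) : 0 < Real.sin (Real.pi / N) :=
  Real.sin_pos_of_pos_of_lt_pi (by positivity)
    (div_lt_self Real.pi_pos (by exact_mod_cast hN))

theorem eval_U_cos_eq_div {x : ℝ} (hx : Real.sin x ≠ 0) (n : ℤ) :
    (U ℝ n).eval (Real.cos x) = Real.sin ((n + 1) * x) / Real.sin x :=
  eq_div_of_mul_eq hx (U_real_cos x n)

theorem mem_Ioo_of_eval_U_eq_zero {n : ℕ} {c : ℝ} (h : (U ℝ n).eval c = 0) :
    c ∈ Set.Ioo (-1) 1 := by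
  have hroot : c ∈ (U ℝ n).roots := by
    rw [mem_roots (U_ne_zero ℝ n (by lia))]
    exact h
  rw [roots_U_real, Finset.mem_val, Finset.mem_image] at hroot
  obtain ⟨m, hm, rfl⟩ := hroot
  have hm' : (m : ℝ) + 1 < n + 1 := by exact_mod_cast Nat.succ_lt_succ (Finset.mem_range.mp hm)
  have hpos : 0 < (m + 1) * Real.pi / (n + 1) := by positivity
  have hlt : (m + 1) * Real.pi / (n + 1) < Real.pi := by
    rw [div_lt_iff₀ (by positivity), mul_comm]
    gcongr
  have hsin := Real.sin_pos_of_pos_of_lt_pi hpos hlt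
  refine abs_lt.mp (sq_lt_one_iff_abs_lt_one _ |>.mp ?_)
  nlinarith [Real.sin_sq_add_cos_sq ((m + 1) * Real.pi / (n + 1))]

/-- The first multiple of `arccos c` that is at least `π` has to be `π` itself. -/
theorem exists_eq_cos_pi_div {c : ℝ} (hc : c ∈ Set.Ioo (-1) 1)
    (h : ∀ n : ℕ, 0 ≤ (U ℝ n).eval c * (U ℝ (n - 1)).eval c) :
    ∃ N : ℕ, 2 ≤ N ∧ c = Real.cos (Real.pi / N) := by
  obtain ⟨x, ⟨hx₀, hxπ⟩, rfl⟩ : ∃ x ∈ Set.Ioo 0 Real.pi, Real.cos x = c :=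
    ⟨Real.arccos c, ⟨Real.arccos_pos.mpr hc.2, Real.arccos_lt_pi.mpr hc.1⟩,
      Real.cos_arccos hc.1.le hc.2.le⟩
  have hsin := Real.sin_pos_of_pos_of_lt_pi hx₀ hxπ
  obtain ⟨n, hn⟩ : ∃ n : ℕ, ⌈Real.pi / x⌉₊ = n + 1 :=
    Nat.exists_eq_succ_of_ne_zero (Nat.ceil_pos.mpr (by positivity)).ne'
  have hle : Real.pi ≤ (n + 1) * x := by
    rw [← div_le_iff₀ hx₀]
    exact_mod_cast hn ▸ Nat.le_ceil (Real.pi / x)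
  have hlt : n * x < Real.pi := by
    rw [← lt_div_iff₀ hx₀]
    exact Nat.lt_ceil.mp (by lia)
  have hn0 : 0 < n := by
    rcases Nat.eq_zero_or_pos n with rfl | hn0
    · rw [Nat.cast_zero, zero_add, one_mul] at hle
      exact absurd hle hxπ.not_ge
    · exact hn0
  have hpos : 0 < Real.sin (n * x) := Real.sin_pos_of_pos_of_lt_pi (by positivity) hlt
  have hnonneg : 0 ≤ Real.sin ((n + 1) * x) := by
    have key := h n
    rw [eval_U_cos_eq_div hsin.ne', eval_U_cos_eq_div hsin.ne'] at key
    push_cast at key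
    rw [sub_add_cancel, div_mul_div_comm, le_div_iff₀ (by positivity), zero_mul] at key
    exact nonneg_of_mul_nonneg_left key hpos
  have heq : (n + 1) * x = Real.pi := by
    refine hle.antisymm' (le_of_not_gt fun hgt ↦ ?_)
    have := Real.sin_pos_of_pos_of_lt_pi (sub_pos.mpr hgt) (by linarith)
    rw [Real.sin_sub_pi] at this
    linarith
  refine ⟨n + 1, by lia, ?_⟩
  rw [← heq, Nat.cast_succ, mul_div_cancel_left₀ _ (by positivity)]

theorem dihedralVec_add_natCast {N : ℕ} (hN : 2 ≤ N) (a b : E) (n : ℤ) :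
    dihedralVec (Real.cos (Real.pi / N)) a b (n + N) =
      -dihedralVec (Real.cos (Real.pi / N)) a b n := by
  have hN0 : (N : ℝ) ≠ 0 := by positivity
  have hU (m : ℤ) : (U ℝ (m + N)).eval (Real.cos (Real.pi / N)) =
      -(U ℝ m).eval (Real.cos (Real.pi / N)) := by
    have harg : ((m + N : ℤ) + 1 : ℝ) * (Real.pi / N) = (m + 1) * (Real.pi / N) + Real.pi := by
      push_cast
      field_simp
      ring
    rw [eval_U_cos_eq_div (sin_pi_div_pos hN).ne', eval_U_cos_eq_div (sin_pi_div_pos hN).ne', harg,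
      Real.sin_add_pi, neg_div]
  rw [dihedralVec, dihedralVec, hU, add_sub_right_comm, hU]
  module

namespace IsUnitPair

variable {Φ : LinearMap.BilinForm ℝ E} {c : ℝ} {a b : E}

theorem exists_eq_add_orthogonal (h : IsUnitPair Φ c a b) (hc : 1 - c ^ 2 ≠ 0) (v : E) :
    ∃ (p q : ℝ) (z : E), v = p • a + q • b + z ∧ Φ a z = 0 ∧ Φ b z = 0 := by
  refine ⟨(Φ a v + c * Φ b v) / (1 - c ^ 2), (Φ b v + c * Φ a v) / (1 - c ^ 2), _,
    (add_sub_cancel _ v).symm, ?_, ?_⟩ <;>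
  · simp only [map_sub, map_add, map_smul, h.left_self, h.right_self, h.left_right, h.right_left,
      smul_eq_mul]
    field_simp
    ring

theorem rotation_pow_eq_one {N : ℕ} (hN : 2 ≤ N) (h : IsUnitPair Φ (Real.cos (Real.pi / N)) a b) :
    (unitReflection Φ a * unitReflection Φ b) ^ N = 1 := by
  have hperiod (n : ℤ) :
      ((unitReflection Φ a * unitReflection Φ b) ^ N)
        (dihedralVec (Real.cos (Real.pi / N)) a b n) =
          dihedralVec (Real.cos (Real.pi / N)) a b n := by
    rw [h.rotation_pow_dihedralVec, two_mul, ← add_assoc, dihedralVec_add_natCast hN,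
      dihedralVec_add_natCast hN, neg_neg]
  have ha := hperiod 0
  have hb := hperiod (-1)
  rw [dihedralVec_zero] at ha
  rw [dihedralVec_neg_one, map_neg, neg_inj] at hb
  have hc : 1 - Real.cos (Real.pi / N) ^ 2 ≠ 0 := by
    rw [← Real.sin_sq]
    exact pow_ne_zero 2 (sin_pi_div_pos hN).ne'
  ext v
  obtain ⟨p, q, z, rfl, haz, hbz⟩ := h.exists_eq_add_orthogonal hc v
  have hz (n : ℕ) : ((unitReflection Φ a * unitReflection Φ b) ^ n) z = z := by
    induction n with
    | zero => simp
    | succ n ih =>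
      simp [pow_succ, unitReflection_apply, haz, hbz, ih]
  simp only [map_add, map_smul, ha, hb, hz, Module.End.one_apply]

theorem dvd_of_rotation_pow_eq_one {N : ℕ} (hN : N ≠ 0)
    (h : IsUnitPair Φ (Real.cos (Real.pi / N)) a b) {n : ℕ}
    (hn : (unitReflection Φ a * unitReflection Φ b) ^ n = 1) : N ∣ n := by
  have hT := h.eval_T_eq_one_of_rotation_pow_eq_one hn
  rw [T_real_cos, Real.cos_eq_one_iff] at hT
  obtain ⟨m, hm⟩ := hT
  have hN0 : (N : ℝ) ≠ 0 := by exact_mod_cast hN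
  have key : (n : ℝ) = N * m := by
    push_cast at hm
    field_simp at hm
    linarith
  exact Int.natCast_dvd_natCast.mp ⟨m, by exact_mod_cast key⟩

theorem orderOf_rotation {N : ℕ} (hN : 2 ≤ N) (h : IsUnitPair Φ (Real.cos (Real.pi / N)) a b) :
    orderOf (unitReflection Φ a * unitReflection Φ b) = N :=
  Nat.dvd_antisymm (orderOf_dvd_of_pow_eq_one (h.rotation_pow_eq_one hN))
    (h.dvd_of_rotation_pow_eq_one (by lia) (pow_orderOf_eq_one _))

theorem mem_Ioo_of_rotation_pow_eq_one (h : IsUnitPair Φ c a b) (hne : b ≠ a) (hne' : b ≠ -a)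
    {n : ℕ} (hn0 : 0 < n) (hn : (unitReflection Φ a * unitReflection Φ b) ^ n = 1) :
    c ∈ Set.Ioo (-1) 1 := by
  have key := h.rotation_pow_dihedralVec n 0
  rw [hn, dihedralVec_zero, Module.End.one_apply, zero_add, dihedralVec] at key
  obtain ⟨m, hm⟩ : ∃ m : ℕ, (2 * n - 1 : ℤ) = m := ⟨2 * n - 1, by lia⟩
  rw [hm] at key
  refine mem_Ioo_of_eval_U_eq_zero (n := m) (by_contra fun hU ↦ ?_)
  have hb : b = ((1 - (U ℝ (2 * n)).eval c) / (U ℝ m).eval c) • a := by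
    rw [div_eq_inv_mul, mul_smul, eq_inv_smul_iff₀ hU, sub_smul, one_smul]
    exact eq_sub_of_add_eq' key.symm
  exact (eq_or_eq_neg_of_form_self_eq_one h.left_self h.right_self hb).elim hne hne'

end IsUnitPair

end Real

end Dihedral

section GeometricRepresentation

open Polynomial Chebyshev

/-- The symmetric form `(α_i, α_j) ↦ -cos (π / m_{ij})` of the geometric representation. When
`m_{ij} = ∞`, encoded as `M i j = 0`, the convention `π / 0 = 0` gives the usual value `-1`. -/
def geomForm (M : CoxeterMatrix B) : LinearMap.BilinForm ℝ (B →₀ ℝ) :=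
  Finsupp.linearCombination ℝ fun i ↦
    Finsupp.linearCombination ℝ fun j ↦ -Real.cos (Real.pi / M i j)

/-- The simple root `α_i` of the geometric representation. -/
abbrev simpleRoot (i : B) : B →₀ ℝ := Finsupp.single i 1

theorem geomForm_simpleRoot (M : CoxeterMatrix B) (i j : B) :
    geomForm M (simpleRoot i) (simpleRoot j) = -Real.cos (Real.pi / M i j) := by
  simp [geomForm]

theorem geomForm_simpleRoot_self (M : CoxeterMatrix B) (i : B) :
    geomForm M (simpleRoot i) (simpleRoot i) = 1 := by
  simp [geomForm_simpleRoot]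

theorem geomForm_comm (M : CoxeterMatrix B) (v w : B →₀ ℝ) :
    geomForm M v w = geomForm M w v := by
  have h : geomForm M = (geomForm M).flip := by
    ext i j
    simp [geomForm, M.symmetric i j]
  exact congrArg (fun F ↦ F v w) h

theorem isUnitPair_simpleRoot (M : CoxeterMatrix B) (i j : B) :
    IsUnitPair (geomForm M) (Real.cos (Real.pi / M i j)) (simpleRoot i) (simpleRoot j) where
  left_self := geomForm_simpleRoot_self M i
  right_self := geomForm_simpleRoot_self M j
  left_right := geomForm_simpleRoot M i j
  right_left := by rw [geomForm_simpleRoot, M.symmetric]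

theorem two_le_coxeterMatrix {i j : B} (hij : i ≠ j) (h0 : M i j ≠ 0) : 2 ≤ M i j := by
  have := M.off_diagonal i j hij
  lia

theorem isLiftable_unitReflection (M : CoxeterMatrix B) :
    M.IsLiftable fun i ↦ unitReflection (geomForm M) (simpleRoot i) := by
  intro i j
  rcases eq_or_ne i j with rfl | hij
  · rw [M.diagonal, pow_one]
    exact unitReflection_mul_self (geomForm_simpleRoot_self M i)
  rcases eq_or_ne (M i j) 0 with h0 | h0
  · rw [h0, pow_zero]
  · exact (isUnitPair_simpleRoot M i j).rotation_pow_eq_one (two_le_coxeterMatrix hij h0)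

/-- The geometric representation of a Coxeter group on the real span of its simple roots. -/
def geomRep (cs : CoxeterSystem M W) : W →* Module.End ℝ (B →₀ ℝ) :=
  cs.lift ⟨_, isLiftable_unitReflection M⟩

variable (cs)

theorem geomRep_simple (i : B) :
    geomRep cs (cs.simple i) = unitReflection (geomForm M) (simpleRoot i) :=
  cs.lift_apply_simple (isLiftable_unitReflection M) i

theorem geomRep_simple_apply (i : B) (v : B →₀ ℝ) :
    geomRep cs (cs.simple i) v = v - (2 * geomForm M (simpleRoot i) v) • simpleRoot i := by
  rw [geomRep_simple, unitReflection_apply]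

theorem geomRep_mul_apply (u w : W) (v : B →₀ ℝ) :
    geomRep cs (u * w) v = geomRep cs u (geomRep cs w v) := by
  rw [map_mul, Module.End.mul_apply]

@[simp]
theorem geomRep_inv_apply_self (w : W) (v : B →₀ ℝ) : geomRep cs w⁻¹ (geomRep cs w v) = v := by
  rw [← geomRep_mul_apply, inv_mul_cancel, map_one, Module.End.one_apply]

@[simp]
theorem geomRep_self_apply_inv (w : W) (v : B →₀ ℝ) : geomRep cs w (geomRep cs w⁻¹ v) = v := by
  rw [← geomRep_mul_apply, mul_inv_cancel, map_one, Module.End.one_apply]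

theorem geomRep_apply_injective (w : W) : Function.Injective (geomRep cs w) :=
  Function.LeftInverse.injective (geomRep_inv_apply_self cs w)

theorem geomForm_geomRep (w : W) (x y : B →₀ ℝ) :
    geomForm M (geomRep cs w x) (geomRep cs w y) = geomForm M x y := by
  induction w using cs.simple_induction_left with
  | one => simp
  | mul_simple_left w i ih =>
    rw [geomRep_mul_apply, geomRep_mul_apply, ← ih, geomRep_simple_apply, geomRep_simple_apply]
    simp only [map_sub, map_smul, LinearMap.sub_apply, LinearMap.smul_apply, smul_eq_mul,
      geomForm_simpleRoot_self, geomForm_comm M _ (simpleRoot i)]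
    ring

theorem geomRep_conj_simple (w : W) (i : B) :
    geomRep cs (w * cs.simple i * w⁻¹) =
      unitReflection (geomForm M) (geomRep cs w (simpleRoot i)) := by
  ext1
  ext1
  rw [LinearMap.comp_apply, LinearMap.comp_apply, geomRep_mul_apply, geomRep_mul_apply,
    geomRep_simple_apply, unitReflection_apply, map_sub, map_smul, geomRep_self_apply_inv,
    ← geomForm_geomRep cs w, geomRep_self_apply_inv]

theorem geomRep_mul_simple_simpleRoot (w : W) (i : B) :
    geomRep cs (w * cs.simple i) (simpleRoot i) = -geomRep cs w (simpleRoot i) := by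
  rw [geomRep_mul_apply, geomRep_simple_apply, geomForm_simpleRoot_self, ← map_neg]
  congr 1
  module

theorem geomRep_simple_simpleRoot (i : B) :
    geomRep cs (cs.simple i) (simpleRoot i) = -simpleRoot i := by
  simpa using geomRep_mul_simple_simpleRoot cs 1 i

/-- The roots of the geometric representation. -/
def IsRoot (γ : B →₀ ℝ) : Prop := ∃ w i, geomRep cs w (simpleRoot i) = γ

variable {cs}

theorem isRoot_simpleRoot (i : B) : IsRoot cs (simpleRoot i) := ⟨1, i, by simp⟩

theorem IsRoot.geomRep_apply {γ : B →₀ ℝ} (hγ : IsRoot cs γ) (w : W) :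
    IsRoot cs (geomRep cs w γ) := by
  obtain ⟨u, i, rfl⟩ := hγ
  exact ⟨w * u, i, geomRep_mul_apply cs w u _⟩

theorem IsRoot.geomForm_self {γ : B →₀ ℝ} (hγ : IsRoot cs γ) : geomForm M γ γ = 1 := by
  obtain ⟨u, i, rfl⟩ := hγ
  rw [geomForm_geomRep, geomForm_simpleRoot_self]

theorem IsRoot.ne_zero {γ : B →₀ ℝ} (hγ : IsRoot cs γ) : γ ≠ 0 := by
  rintro rfl
  simpa using hγ.geomForm_self

theorem IsRoot.isUnitPair {a b : B →₀ ℝ} (ha : IsRoot cs a) (hb : IsRoot cs b) :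
    IsUnitPair (geomForm M) (-geomForm M a b) a b :=
  ⟨ha.geomForm_self, hb.geomForm_self, by simp, by simp [geomForm_comm M b]⟩

end GeometricRepresentation

section AlternatingProducts

variable (cs)

/-- The alternating product `s_i s_j s_i ⋯` with `n` factors. -/
def altProd (i j : B) : ℕ → W
  | 0 => 1
  | n + 1 => cs.simple i * altProd j i n

/-- The letter which continues the alternating word `i j i ⋯` of length `n`. -/
def altNext (i j : B) : ℕ → B
  | 0 => i
  | n + 1 => altNext j i n

theorem geomRep_altProd (i j : B) (n : ℕ) :
    geomRep cs (altProd cs i j n) (simpleRoot (altNext i j n)) =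
      dihedralVec (Real.cos (Real.pi / M i j)) (simpleRoot i) (simpleRoot j) n := by
  induction n generalizing i j with
  | zero => simp [altProd, altNext]
  | succ n ih =>
    rw [altProd, altNext, geomRep_mul_apply, ih, geomRep_simple,
      (isUnitPair_simpleRoot M j i).reflection_right_dihedralVec, M.symmetric]
    rfl

/-- Mathlib's alternating words are determined by their last letter rather than their first. -/
theorem wordProd_alternatingWord (i j : B) (n : ℕ) :
    (Even n → cs.wordProd (CoxeterSystem.alternatingWord i j n) = altProd cs i j n ∧
      altNext i j n = i) ∧
    (¬Even n → cs.wordProd (CoxeterSystem.alternatingWord i j n) = altProd cs j i n ∧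
      altNext j i n = i) := by
  induction n with
  | zero => simp [altProd, altNext, CoxeterSystem.alternatingWord]
  | succ n ih =>
    rw [Nat.even_add_one, CoxeterSystem.alternatingWord_succ', cs.wordProd_cons, altProd, altProd,
      altNext, altNext]
    by_cases hn : Even n
    · simp [hn, ih.1 hn]
    · simp [hn, ih.2 hn]

theorem exists_eq_mul_wordProd_alternatingWord {w : W} {i : B} (hi : ¬cs.IsRightDescent w i)
    (j : B) : ∃ (v : W) (n : ℕ), w = v * cs.wordProd (CoxeterSystem.alternatingWord i j n) ∧
      cs.length w = cs.length v + n ∧ ¬cs.IsRightDescent v i ∧ ¬cs.IsRightDescent v j := by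
  induction hl : cs.length w generalizing w i j with
  | zero => exact ⟨w, 0, by simp [CoxeterSystem.alternatingWord], hl.symm, hi, by
      simp [cs.length_eq_zero_iff.mp hl, cs.not_isRightDescent_one]⟩
  | succ l ih =>
    by_cases hj : cs.IsRightDescent w j
    · obtain ⟨v, n, hw, hlen, hvj, hvi⟩ :=
        ih (cs.isRightDescent_iff_not_isRightDescent_mul.mp hj) i
          (by have := cs.isRightDescent_iff.mp hj; lia)
      refine ⟨v, n + 1, ?_, by lia, hvi, hvj⟩
      rw [CoxeterSystem.alternatingWord_succ, cs.wordProd_concat, ← mul_assoc, ← hw,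
        cs.simple_mul_simple_cancel_right]
    · exact ⟨w, 0, by simp [CoxeterSystem.alternatingWord], hl.symm, hi, hj⟩

theorem length_alternatingWord_lt {v : W} {i j : B} {n : ℕ} (h0 : M i j ≠ 0)
    (hlen : cs.length (v * cs.wordProd (CoxeterSystem.alternatingWord i j n)) = cs.length v + n)
    (hi : ¬cs.IsRightDescent (v * cs.wordProd (CoxeterSystem.alternatingWord i j n)) i) :
    n < M i j := by
  by_contra hle
  rw [cs.not_isRightDescent_iff, mul_assoc, ← cs.wordProd_concat,
    ← CoxeterSystem.alternatingWord_succ] at hi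
  rw [M.symmetric] at h0 hle
  refine cs.not_isReduced_alternatingWord j i (m := n + 1) h0 (by lia) ?_
  have hmul := cs.length_mul_le v (cs.wordProd (CoxeterSystem.alternatingWord j i (n + 1)))
  have hword := cs.length_wordProd_le (CoxeterSystem.alternatingWord j i (n + 1))
  rw [CoxeterSystem.IsReduced]
  rw [CoxeterSystem.length_alternatingWord] at hword ⊢
  lia

/-- Splitting off the longest dihedral right factor: the induction step for everything proved
about roots `w α_i` by induction on `ℓ(w)`. -/
theorem exists_eq_mul_altProd {w : W} {i : B} (hi : ¬cs.IsRightDescent w i) (hw : w ≠ 1) :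
    ∃ (v : W) (p q : B) (n : ℕ), p ≠ q ∧ w = v * altProd cs p q n ∧ altNext p q n = i ∧
      0 < n ∧ cs.length w = cs.length v + n ∧ (M p q = 0 ∨ n < M p q) ∧
      ¬cs.IsRightDescent v p ∧ ¬cs.IsRightDescent v q := by
  obtain ⟨j, hj⟩ := cs.exists_rightDescent_of_ne_one hw
  have hij : i ≠ j := by
    rintro rfl
    exact hi hj
  obtain ⟨v, n, rfl, hlen, hvi, hvj⟩ := exists_eq_mul_wordProd_alternatingWord cs hi j
  have hn : 0 < n := by
    refine Nat.pos_of_ne_zero fun h ↦ hvj ?_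
    simpa [h, CoxeterSystem.alternatingWord] using hj
  have hM : M i j = 0 ∨ n < M i j :=
    or_iff_not_imp_left.mpr fun h0 ↦ length_alternatingWord_lt cs h0 hlen hi
  by_cases heven : Even n
  · obtain ⟨hprod, hnext⟩ := (wordProd_alternatingWord cs i j n).1 heven
    exact ⟨v, i, j, n, hij, by rw [hprod], hnext, hn, hlen, hM, hvi, hvj⟩
  · obtain ⟨hprod, hnext⟩ := (wordProd_alternatingWord cs i j n).2 heven
    exact ⟨v, j, i, n, hij.symm, by rw [hprod], hnext, hn, hlen, M.symmetric i j ▸ hM, hvj, hvi⟩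

end AlternatingProducts

section Positivity

open Polynomial Chebyshev

theorem eval_U_cos_pi_div_nonneg {m n : ℕ} (h : m = 0 ∨ 2 ≤ m ∧ n ≤ m) :
    0 ≤ (U ℝ ((n : ℤ) - 1)).eval (Real.cos (Real.pi / m)) := by
  rcases h with rfl | ⟨hm, hn⟩
  · simp
  · have hle : n * (Real.pi / m) ≤ Real.pi := by
      rw [mul_div_left_comm]
      refine mul_le_of_le_one_right Real.pi_pos.le (div_le_one_of_le₀ ?_ (by positivity))
      exact_mod_cast hn
    rw [eval_U_cos_eq_div (sin_pi_div_pos hm).ne']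
    push_cast
    rw [sub_add_cancel]
    exact div_nonneg (Real.sin_nonneg_of_nonneg_of_le_pi (by positivity) hle)
      (sin_pi_div_pos hm).le

variable (cs)

theorem geomRep_simpleRoot_nonneg {w : W} {i : B} (hi : ¬cs.IsRightDescent w i) :
    0 ≤ geomRep cs w (simpleRoot i) := by
  induction hl : cs.length w using Nat.strong_induction_on generalizing w i with
  | _ l ih =>
    subst hl
    rcases eq_or_ne w 1 with rfl | hw
    · simp [simpleRoot]
    obtain ⟨v, p, q, n, hpq, rfl, rfl, hn, hlen, hM, hvp, hvq⟩ := exists_eq_mul_altProd cs hi hw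
    have hU {l : ℕ} (hl : l ≤ n + 1) :
        0 ≤ (U ℝ ((l : ℤ) - 1)).eval (Real.cos (Real.pi / M p q)) :=
      eval_U_cos_pi_div_nonneg <| hM.imp_right fun h ↦
        ⟨two_le_coxeterMatrix hpq (by lia), by lia⟩
    have hn1 : 0 ≤ (U ℝ n).eval (Real.cos (Real.pi / M p q)) := by simpa using hU le_rfl
    rw [geomRep_mul_apply, geomRep_altProd, dihedralVec, map_add, map_smul, map_smul]
    exact add_nonneg (smul_nonneg hn1 (ih _ (by lia) hvp rfl))
      (smul_nonneg (hU n.le_succ) (ih _ (by lia) hvq rfl))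

theorem geomRep_simpleRoot_nonpos {w : W} {i : B} (hi : cs.IsRightDescent w i) :
    geomRep cs w (simpleRoot i) ≤ 0 := by
  have h := geomRep_simpleRoot_nonneg cs (cs.isRightDescent_iff_not_isRightDescent_mul.mp hi)
  rwa [geomRep_mul_simple_simpleRoot, neg_nonneg] at h

variable {cs}

theorem IsRoot.nonneg_or_nonpos {γ : B →₀ ℝ} (hγ : IsRoot cs γ) : 0 ≤ γ ∨ γ ≤ 0 := by
  obtain ⟨w, i, rfl⟩ := hγ
  by_cases hi : cs.IsRightDescent w i
  · exact .inr (geomRep_simpleRoot_nonpos cs hi)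
  · exact .inl (geomRep_simpleRoot_nonneg cs hi)

theorem IsRoot.not_nonpos {γ : B →₀ ℝ} (hγ : IsRoot cs γ) (h : 0 ≤ γ) : ¬γ ≤ 0 :=
  fun h' ↦ hγ.ne_zero (h'.antisymm h)

variable (cs)

theorem geomRep_injective : Function.Injective (geomRep cs) := by
  refine (injective_iff_map_eq_one _).mpr fun w hw ↦ by_contra fun hne ↦ ?_
  obtain ⟨j, hj⟩ := cs.exists_rightDescent_of_ne_one hne
  have h := geomRep_simpleRoot_nonpos cs hj
  rw [hw, Module.End.one_apply] at h
  exact (isRoot_simpleRoot (cs := cs) j).not_nonpos (by simp [simpleRoot]) h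

theorem orderOf_simple_mul_simple {i j : B} (hij : i ≠ j) (h0 : M i j ≠ 0) :
    orderOf (cs.simple i * cs.simple j) = M i j := by
  rw [← orderOf_injective _ (geomRep_injective cs), map_mul, geomRep_simple, geomRep_simple]
  exact (isUnitPair_simpleRoot M i j).orderOf_rotation (two_le_coxeterMatrix hij h0)

theorem conj_simple_eq_iff {v w : W} {i j : B} :
    v * cs.simple i * v⁻¹ = w * cs.simple j * w⁻¹ ↔
      geomRep cs w (simpleRoot j) = geomRep cs v (simpleRoot i) ∨
        geomRep cs w (simpleRoot j) = -geomRep cs v (simpleRoot i) := by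
  rw [← (geomRep_injective cs).eq_iff, geomRep_conj_simple, geomRep_conj_simple]
  refine ⟨eq_or_eq_neg_of_unitReflection_eq two_ne_zero (IsRoot.geomForm_self ⟨v, i, rfl⟩)
    (IsRoot.geomForm_self ⟨w, j, rfl⟩), ?_⟩
  rintro (h | h)
  · rw [h]
  · ext1
    ext1
    simp [h, unitReflection_apply]

variable {cs}

theorem IsRoot.eq_simpleRoot_of_nonneg {γ : B →₀ ℝ} (hγ : IsRoot cs γ) (hpos : 0 ≤ γ) {j : B}
    (hsupp : ∀ l ≠ j, γ l = 0) : γ = simpleRoot j := by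
  have hsmul : γ = γ j • simpleRoot j := by
    ext l
    rcases eq_or_ne l j with rfl | hl <;> simp_all [simpleRoot]
  rcases eq_or_eq_neg_of_form_self_eq_one (geomForm_simpleRoot_self M j) hγ.geomForm_self hsmul
    with h | h
  · exact h
  · refine absurd ?_ (hγ.not_nonpos hpos)
    simp [h, simpleRoot]

/-- Reflecting in `α_j` changes only the coefficient of `α_j`. -/
theorem IsRoot.eq_simpleRoot_of_simple_nonpos {γ : B →₀ ℝ} (hγ : IsRoot cs γ) (hpos : 0 ≤ γ)
    {j : B} (h : geomRep cs (cs.simple j) γ ≤ 0) : γ = simpleRoot j := by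
  refine hγ.eq_simpleRoot_of_nonneg hpos fun l hl ↦ (hpos l).antisymm' ?_
  simpa [geomRep_simple_apply, simpleRoot, Finsupp.single_apply, hl.symm] using h l

theorem length_mul_reflection_lt {w : W} {i : B} (hpos : 0 ≤ geomRep cs w (simpleRoot i)) {x : W}
    (hneg : geomRep cs x (geomRep cs w (simpleRoot i)) ≤ 0) :
    cs.length (x * (w * cs.simple i * w⁻¹)) < cs.length x := by
  have hroot : IsRoot cs (geomRep cs w (simpleRoot i)) := ⟨w, i, rfl⟩
  induction hl : cs.length x generalizing x with
  | zero =>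
    rw [cs.length_eq_zero_iff.mp hl, map_one, Module.End.one_apply] at hneg
    exact absurd hneg (hroot.not_nonpos hpos)
  | succ l ih =>
    have hx : x ≠ 1 := by
      rintro rfl
      simp at hl
    obtain ⟨j, hj⟩ := cs.exists_leftDescent_of_ne_one hx
    obtain ⟨y, rfl⟩ : ∃ y, x = cs.simple j * y := ⟨cs.simple j * x, by simp⟩
    have hly : cs.length y = l := by
      have := cs.isLeftDescent_iff.mp hj
      rw [cs.simple_mul_simple_cancel_left] at this
      lia
    rw [geomRep_mul_apply] at hneg
    rcases (hroot.geomRep_apply y).nonneg_or_nonpos with hy | hy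
    · have hα := (hroot.geomRep_apply y).eq_simpleRoot_of_simple_nonpos hy hneg
      have hconj : y * w * cs.simple i * (y * w)⁻¹ = 1 * cs.simple j * 1⁻¹ :=
        (conj_simple_eq_iff cs).mpr (.inl (by rw [geomRep_mul_apply, hα, map_one]; rfl))
      have hmul : cs.simple j * y * (w * cs.simple i * w⁻¹) = y := calc
        _ = cs.simple j * (y * w * cs.simple i * (y * w)⁻¹) * y := by group
        _ = y := by rw [hconj]; simp
      rw [hmul, hly]
      exact l.lt_succ_self
    · have hlt := ih hy hly
      have hle := cs.length_simple_mul (y * (w * cs.simple i * w⁻¹)) j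
      rw [mul_assoc]
      lia

end Positivity

section CanonicalRoots

open Polynomial Chebyshev

/-- The roots whose reflections lie in the subgroup `W'`. -/
def IsSubgroupRoot (cs : CoxeterSystem M W) (W' : Subgroup W) (γ : B →₀ ℝ) : Prop :=
  ∃ w i, geomRep cs w (simpleRoot i) = γ ∧ w * cs.simple i * w⁻¹ ∈ W'

/-- The positive roots whose reflections are the canonical generators of `W'`. -/
def IsCanonicalRoot (cs : CoxeterSystem M W) (W' : Subgroup W) (γ : B →₀ ℝ) : Prop :=
  0 ≤ γ ∧ ∃ w i, geomRep cs w (simpleRoot i) = γ ∧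
    w * cs.simple i * w⁻¹ ∈ canonicalGens cs (W' : Set W)

variable {W' : Subgroup W} {a b γ : B →₀ ℝ}

theorem mem_of_mem_canonicalGens {A : Set W} {t : W} (ht : t ∈ canonicalGens cs A) : t ∈ A :=
  (ht.2.superset rfl).2

theorem IsSubgroupRoot.isRoot (hγ : IsSubgroupRoot cs W' γ) : IsRoot cs γ := by
  obtain ⟨w, i, rfl, -⟩ := hγ
  exact ⟨w, i, rfl⟩

theorem IsSubgroupRoot.neg (hγ : IsSubgroupRoot cs W' γ) : IsSubgroupRoot cs W' (-γ) := by
  obtain ⟨w, i, rfl, hmem⟩ := hγ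
  exact ⟨w * cs.simple i, i, geomRep_mul_simple_simpleRoot cs w i, by simpa [mul_assoc] using hmem⟩

theorem IsSubgroupRoot.geomRep_apply (hγ : IsSubgroupRoot cs W' γ) {x : W} (hx : x ∈ W') :
    IsSubgroupRoot cs W' (geomRep cs x γ) := by
  obtain ⟨w, i, rfl, hmem⟩ := hγ
  refine ⟨x * w, i, geomRep_mul_apply cs x w _, ?_⟩
  have hconj : x * w * cs.simple i * (x * w)⁻¹ = x * (w * cs.simple i * w⁻¹) * x⁻¹ := by group
  rw [hconj]
  exact W'.mul_mem (W'.mul_mem hx hmem) (W'.inv_mem hx)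

namespace IsCanonicalRoot

theorem isSubgroupRoot (ha : IsCanonicalRoot cs W' a) : IsSubgroupRoot cs W' a := by
  obtain ⟨-, w, i, rfl, hmem⟩ := ha
  exact ⟨w, i, rfl, mem_of_mem_canonicalGens hmem⟩

theorem isRoot (ha : IsCanonicalRoot cs W' a) : IsRoot cs a := ha.isSubgroupRoot.isRoot

theorem isSubgroupRoot_reflection (ha : IsCanonicalRoot cs W' a) (hγ : IsSubgroupRoot cs W' γ) :
    IsSubgroupRoot cs W' (unitReflection (geomForm M) a γ) := by
  obtain ⟨-, w, i, rfl, hmem⟩ := ha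
  rw [← geomRep_conj_simple]
  exact hγ.geomRep_apply (mem_of_mem_canonicalGens hmem)

theorem reflection_nonneg (ha : IsCanonicalRoot cs W' a) (hγ : IsSubgroupRoot cs W' γ)
    (hpos : 0 ≤ γ) (hne : γ ≠ a) : 0 ≤ unitReflection (geomForm M) a γ := by
  have hroot := (ha.isSubgroupRoot_reflection hγ).isRoot
  obtain ⟨hapos, w, i, rfl, hcan⟩ := ha
  obtain ⟨v, j, rfl, hmem⟩ := hγ
  refine hroot.nonneg_or_nonpos.resolve_right fun hneg ↦ ?_
  rw [← geomRep_conj_simple] at hneg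
  have heq : v * cs.simple j * v⁻¹ = w * cs.simple i * w⁻¹ :=
    hcan.2.subset ⟨⟨⟨v, j, rfl⟩, length_mul_reflection_lt hpos hneg⟩, hmem⟩
  rcases (conj_simple_eq_iff cs).mp heq.symm with h | h
  · exact hne h
  · refine (IsRoot.not_nonpos ⟨v, j, rfl⟩ hpos) ?_
    rwa [h, neg_nonpos]

theorem ne_neg (ha : IsCanonicalRoot cs W' a) (hb : IsCanonicalRoot cs W' b) : b ≠ -a := by
  rintro rfl
  exact ha.isRoot.not_nonpos ha.1 (neg_nonneg.mp hb.1)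

theorem not_nonneg_sub (ha : IsCanonicalRoot cs W' a) (hb : IsCanonicalRoot cs W' b) (hab : b ≠ a)
    {p q : ℝ} (hp : 0 < p) (hq : 0 < q) (hγ : IsSubgroupRoot cs W' (p • a - q • b)) :
    ¬0 ≤ p • a - q • b := by
  intro hpos
  have hne : p • a - q • b ≠ a := by
    intro h
    have hsmul : b = (q⁻¹ * (p - 1)) • a := by
      rw [mul_smul, eq_inv_smul_iff₀ hq.ne', sub_smul, one_smul]
      exact (sub_eq_iff_eq_add'.mpr (sub_eq_iff_eq_add.mp h)).symm
    exact (eq_or_eq_neg_of_form_self_eq_one ha.isRoot.geomForm_self hb.isRoot.geomForm_self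
      hsmul).elim hab (ha.ne_neg hb)
  refine (ha.isSubgroupRoot_reflection hγ).isRoot.not_nonpos (ha.reflection_nonneg hγ hpos hne) ?_
  have hself : unitReflection (geomForm M) a a = -a := by
    rw [unitReflection_apply, ha.isRoot.geomForm_self]
    module
  rw [map_sub, map_smul, map_smul, hself, smul_neg, sub_nonpos]
  exact (neg_nonpos.mpr (smul_nonneg hp.le ha.1)).trans
    (smul_nonneg hq.le (ha.reflection_nonneg hb.isSubgroupRoot hb.1 hab))

theorem not_isSubgroupRoot_sub (ha : IsCanonicalRoot cs W' a) (hb : IsCanonicalRoot cs W' b)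
    (hab : b ≠ a) {p q : ℝ} (hp : 0 < p) (hq : 0 < q) :
    ¬IsSubgroupRoot cs W' (p • a - q • b) := by
  intro hγ
  rcases hγ.isRoot.nonneg_or_nonpos with hpos | hneg
  · exact ha.not_nonneg_sub hb hab hp hq hγ hpos
  · rw [← neg_nonneg, neg_sub] at hneg
    exact hb.not_nonneg_sub ha hab.symm hq hp (neg_sub (p • a) (q • b) ▸ hγ.neg) hneg

theorem isSubgroupRoot_dihedralVec (ha : IsCanonicalRoot cs W' a) (hb : IsCanonicalRoot cs W' b)
    {c : ℝ} (hc : IsUnitPair (geomForm M) c a b) (n : ℕ) :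
    IsSubgroupRoot cs W' (dihedralVec c a b n) := by
  induction n generalizing a b with
  | zero => simpa using ha.isSubgroupRoot
  | succ n ih =>
    rw [Nat.cast_succ, ← hc.symm.reflection_right_dihedralVec]
    exact ha.isSubgroupRoot_reflection (ih hb ha hc.symm)

/-- Otherwise some `dihedralVec c a b n` would have coefficients of opposite signs. -/
theorem eval_U_mul_eval_U_nonneg (ha : IsCanonicalRoot cs W' a) (hb : IsCanonicalRoot cs W' b)
    (hab : b ≠ a) {c : ℝ} (hc : IsUnitPair (geomForm M) c a b) (n : ℕ) :
    0 ≤ (U ℝ n).eval c * (U ℝ (n - 1)).eval c := by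
  by_contra! hneg
  have hγ := ha.isSubgroupRoot_dihedralVec hb hc n
  rw [dihedralVec] at hγ
  rcases mul_neg_iff.mp hneg with ⟨hp, hq⟩ | ⟨hp, hq⟩
  · refine ha.not_isSubgroupRoot_sub hb hab hp (neg_pos.mpr hq) ?_
    rwa [neg_smul, sub_neg_eq_add]
  · refine hb.not_isSubgroupRoot_sub ha hab.symm hq (neg_pos.mpr hp) ?_
    rwa [neg_smul, sub_neg_eq_add, add_comm]

theorem exists_isUnitPair_cos_pi_div (ha : IsCanonicalRoot cs W' a) (hb : IsCanonicalRoot cs W' b)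
    (hab : b ≠ a) {n : ℕ} (hn0 : 0 < n)
    (hn : (unitReflection (geomForm M) a * unitReflection (geomForm M) b) ^ n = 1) :
    ∃ N : ℕ, 2 ≤ N ∧ IsUnitPair (geomForm M) (Real.cos (Real.pi / N)) a b := by
  have hc := ha.isRoot.isUnitPair hb.isRoot
  obtain ⟨N, hN, hcos⟩ := exists_eq_cos_pi_div
    (hc.mem_Ioo_of_rotation_pow_eq_one hab (ha.ne_neg hb) hn0 hn)
    (ha.eval_U_mul_eval_U_nonneg hb hab hc)
  exact ⟨N, hN, hcos ▸ hc⟩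

end IsCanonicalRoot

end CanonicalRoots

section ParabolicReduction

/-- The standard parabolic subgroup generated by the simple reflections in `J`. -/
def parabolic (cs : CoxeterSystem M W) (J : Set B) : Subgroup W :=
  Subgroup.closure (cs.simple '' J)

/-- The positive roots on which the linear form `f` is negative. -/
def negRoots (cs : CoxeterSystem M W) (f : Module.Dual ℝ (B →₀ ℝ)) : Set (B →₀ ℝ) :=
  {γ | IsRoot cs γ ∧ 0 ≤ γ ∧ f γ < 0}

variable (cs)

theorem simple_mem_parabolic {J : Set B} {i : B} (hi : i ∈ J) : cs.simple i ∈ parabolic cs J :=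
  Subgroup.subset_closure ⟨i, hi, rfl⟩

variable {cs}

theorem geomRep_mem_of_mem_parabolic {J : Set B} {X : Set (B →₀ ℝ)}
    (hX : ∀ i ∈ J, ∀ v ∈ X, geomRep cs (cs.simple i) v ∈ X) {u : W} (hu : u ∈ parabolic cs J)
    {v : B →₀ ℝ} (hv : v ∈ X) : geomRep cs u v ∈ X := by
  induction hu using Subgroup.closure_induction_left with
  | one => simpa using hv
  | mul_left x hx y _ ih =>
    obtain ⟨i, hi, rfl⟩ := hx
    rw [geomRep_mul_apply]
    exact hX i hi _ ih
  | inv_mul_cancel x hx y _ ih =>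
    obtain ⟨i, hi, rfl⟩ := hx
    rw [cs.inv_simple, geomRep_mul_apply]
    exact hX i hi _ ih

theorem geomRep_mem_supported {J : Set B} {u : W} (hu : u ∈ parabolic cs J) {v : B →₀ ℝ}
    (hv : v ∈ Finsupp.supported ℝ ℝ J) : geomRep cs u v ∈ Finsupp.supported ℝ ℝ J := by
  refine geomRep_mem_of_mem_parabolic (X := Finsupp.supported ℝ ℝ J) (fun i hi w hw ↦ ?_) hu hv
  rw [geomRep_simple_apply]
  exact sub_mem hw (Submodule.smul_mem _ _ (Finsupp.single_mem_supported ℝ _ hi))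

theorem finite_setOf_not_geomRep_nonneg (cs : CoxeterSystem M W) (x : W) :
    {γ | IsRoot cs γ ∧ 0 ≤ γ ∧ ¬0 ≤ geomRep cs x γ}.Finite := by
  induction x using cs.simple_induction_left with
  | one =>
    refine Set.finite_empty.subset ?_
    rintro γ ⟨-, hpos, hneg⟩
    simp_all
  | mul_simple_left x j ih =>
    refine (ih.union (Set.finite_singleton (geomRep cs x⁻¹ (simpleRoot j)))).subset ?_
    rintro γ ⟨hγ, hpos, hneg⟩
    rw [geomRep_mul_apply] at hneg
    refine or_iff_not_imp_left.mpr fun hx ↦ ?_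
    have hx' : 0 ≤ geomRep cs x γ := by
      by_contra h
      exact hx ⟨hγ, hpos, h⟩
    have hxγ := hγ.geomRep_apply x
    have hle := (hxγ.geomRep_apply (cs.simple j)).nonneg_or_nonpos.resolve_left hneg
    rw [Set.mem_singleton_iff, ← hxγ.eq_simpleRoot_of_simple_nonpos hx' hle,
      geomRep_inv_apply_self]

/-- If `f(α_i) < 0` then `s_i` permutes the positive roots other than `α_i`, so replacing `f` by
`f ∘ s_i` removes a root on which the form is negative. -/
theorem image_negRoots_comp_simple_ssubset {f : Module.Dual ℝ (B →₀ ℝ)} {i : B}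
    (hi : f (simpleRoot i) < 0) :
    geomRep cs (cs.simple i) '' negRoots cs (f ∘ₗ geomRep cs (cs.simple i)) ⊂ negRoots cs f := by
  have hα : (0 : B →₀ ℝ) ≤ simpleRoot i := by simp [simpleRoot]
  refine ⟨?_, fun h ↦ ?_⟩
  · rintro - ⟨γ, ⟨hγ, hpos, hneg⟩, rfl⟩
    refine ⟨hγ.geomRep_apply _, (hγ.geomRep_apply _).nonneg_or_nonpos.resolve_right fun hle ↦ ?_,
      hneg⟩
    rw [hγ.eq_simpleRoot_of_simple_nonpos hpos hle, LinearMap.comp_apply,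
      geomRep_simple_simpleRoot, map_neg] at hneg
    linarith
  · obtain ⟨γ, ⟨hγ, hpos, -⟩, hγα⟩ := h ⟨isRoot_simpleRoot i, hα, hi⟩
    have hγ' : γ = -simpleRoot i := by
      rw [← geomRep_simple_simpleRoot cs, ← hγα, ← geomRep_mul_apply,
        cs.simple_mul_simple_self, map_one, Module.End.one_apply]
    exact hγ.not_nonpos hpos (by simp [hγ'])

theorem exists_mem_parabolic_forall_nonneg (J : Set B) {f : Module.Dual ℝ (B →₀ ℝ)}
    (hf : (negRoots cs f).Finite) :
    ∃ u ∈ parabolic cs J, ∀ i ∈ J, 0 ≤ f (geomRep cs u⁻¹ (simpleRoot i)) := by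
  induction hn : (negRoots cs f).ncard using Nat.strong_induction_on generalizing f with
  | _ n ih =>
    by_cases! hpos : ∀ i ∈ J, 0 ≤ f (simpleRoot i)
    · exact ⟨1, one_mem _, by simpa using hpos⟩
    obtain ⟨i, hi, hneg⟩ := hpos
    have hss := image_negRoots_comp_simple_ssubset (cs := cs) hneg
    have hinj := geomRep_apply_injective cs (cs.simple i)
    have hfin := (hf.subset hss.subset).of_finite_image hinj.injOn
    have hlt := Set.ncard_lt_ncard hss hf
    rw [Set.ncard_image_of_injective _ hinj, hn] at hlt
    obtain ⟨u, hu, hnonneg⟩ := ih _ hlt hfin rfl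
    refine ⟨u * cs.simple i, mul_mem hu (simple_mem_parabolic cs hi), fun l hl ↦ ?_⟩
    rw [mul_inv_rev, cs.inv_simple, geomRep_mul_apply]
    exact hnonneg l hl

theorem sum_smul_simpleRoot_of_mem_supported {J : Finset B} {v : B →₀ ℝ}
    (hv : v ∈ Finsupp.supported ℝ ℝ (J : Set B)) : ∑ i ∈ J, v i • simpleRoot i = v := by
  simp only [simpleRoot, Finsupp.smul_single_one]
  exact (v.sum_of_support_subset ((Finsupp.mem_supported ℝ v).mp hv) _ (by simp)).symm.trans
    v.sum_single

/-- A nonnegative combination of the numbers `f(u⁻¹ α_i)` vanishes only if each term does. -/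
theorem exists_supported_of_apply_eq_zero {J : Finset B} {f : Module.Dual ℝ (B →₀ ℝ)}
    (hf : (negRoots cs f).Finite) (hne : ∃ v ∈ Finsupp.supported ℝ ℝ (J : Set B), f v ≠ 0) :
    ∃ u ∈ parabolic cs J, ∃ J' ⊂ J, ∀ γ ∈ Finsupp.supported ℝ ℝ (J : Set B), IsRoot cs γ →
      f γ = 0 → geomRep cs u γ ∈ Finsupp.supported ℝ ℝ (J' : Set B) := by
  obtain ⟨u, hu, hnonneg⟩ := exists_mem_parabolic_forall_nonneg (J : Set B) hf
  have hsum {v : B →₀ ℝ} (hv : v ∈ Finsupp.supported ℝ ℝ (J : Set B)) :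
      f v = ∑ i ∈ J, geomRep cs u v i * f (geomRep cs u⁻¹ (simpleRoot i)) := by
    conv_lhs => rw [← geomRep_inv_apply_self cs u v,
      ← sum_smul_simpleRoot_of_mem_supported (geomRep_mem_supported hu hv)]
    simp only [map_sum, map_smul, smul_eq_mul]
  refine ⟨u, hu, {i ∈ J | f (geomRep cs u⁻¹ (simpleRoot i)) = 0}, ?_, fun γ hγ hroot hzero ↦ ?_⟩
  · rw [Finset.filter_ssubset]
    by_contra! hall
    obtain ⟨v, hv, hfv⟩ := hne
    exact hfv ((hsum hv).trans (Finset.sum_eq_zero fun i hi ↦ by rw [hall i hi, mul_zero]))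
  · have hterm : ∀ i ∈ J, geomRep cs u γ i * f (geomRep cs u⁻¹ (simpleRoot i)) = 0 := by
      rw [hsum hγ] at hzero
      rcases (hroot.geomRep_apply u).nonneg_or_nonpos with h | h
      · exact (Finset.sum_eq_zero_iff_of_nonneg fun i hi ↦
          mul_nonneg (h i) (hnonneg i hi)).mp hzero
      · exact (Finset.sum_eq_zero_iff_of_nonpos fun i hi ↦
          mul_nonpos_of_nonpos_of_nonneg (h i) (hnonneg i hi)).mp hzero
    refine (Finsupp.mem_supported' ℝ _).mpr fun i hi ↦ ?_
    by_cases hiJ : i ∈ J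
    · exact (mul_eq_zero.mp (hterm i hiJ)).resolve_right fun h ↦ hi (by simp [hiJ, h])
    · exact (Finsupp.mem_supported' ℝ _).mp (geomRep_mem_supported hu hγ) i hiJ

/-- The sum of the first `N` powers of the action of `c`; if `c ^ N = 1` this is, up to a factor,
the projection to the invariants of `c`. -/
def orbitSum (cs : CoxeterSystem M W) (c : W) (N : ℕ) : Module.End ℝ (B →₀ ℝ) :=
  ∑ n ∈ Finset.range N, geomRep cs c ^ n

theorem orbitSum_conj (u c : W) (N : ℕ) (v : B →₀ ℝ) :
    orbitSum cs (u * c * u⁻¹) N v = geomRep cs u (orbitSum cs c N (geomRep cs u⁻¹ v)) := by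
  simp only [orbitSum, LinearMap.sum_apply, map_sum, ← map_pow, conj_pow, geomRep_mul_apply]

theorem orbitSum_geomRep {c : W} {N : ℕ} (hc : geomRep cs c ^ N = 1) (v : B →₀ ℝ) :
    orbitSum cs c N (geomRep cs c v) = orbitSum cs c N v := by
  have h := (Finset.sum_range_succ' (fun n ↦ (geomRep cs c ^ n) v) N).symm.trans
    (Finset.sum_range_succ (fun n ↦ (geomRep cs c ^ n) v) N)
  rw [hc, pow_zero, add_left_inj] at h
  simpa only [orbitSum, LinearMap.sum_apply, ← Module.End.mul_apply, ← pow_succ] using h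

theorem finite_negRoots_orbitSum (c : W) (N : ℕ) (l : B) :
    (negRoots cs (Finsupp.lapply l ∘ₗ orbitSum cs c N)).Finite := by
  refine ((Finset.range N).finite_toSet.biUnion fun n _ ↦
    finite_setOf_not_geomRep_nonneg cs (c ^ n)).subset ?_
  rintro γ ⟨hγ, hpos, hneg⟩
  have hsum : ∑ n ∈ Finset.range N, geomRep cs (c ^ n) γ l < ∑ n ∈ Finset.range N, 0 := by
    simpa [orbitSum] using hneg
  obtain ⟨n, hn, hlt⟩ := Finset.exists_lt_of_sum_lt hsum
  exact Set.mem_biUnion hn ⟨hγ, hpos, fun h ↦ (h l).not_gt hlt⟩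

theorem exists_supported_of_orbitSum_eq_zero (c : W) (N : ℕ) (J : Finset B) :
    ∃ u ∈ parabolic cs J, ∃ J' ⊆ J,
      (∀ γ ∈ Finsupp.supported ℝ ℝ (J : Set B), IsRoot cs γ → orbitSum cs c N γ = 0 →
        geomRep cs u γ ∈ Finsupp.supported ℝ ℝ (J' : Set B)) ∧
      ∀ v ∈ Finsupp.supported ℝ ℝ (J' : Set B), orbitSum cs c N (geomRep cs u⁻¹ v) = 0 := by
  induction J using Finset.strongInduction generalizing c with
  | H J ih =>
    by_cases! hker : ∀ v ∈ Finsupp.supported ℝ ℝ (J : Set B), orbitSum cs c N v = 0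
    · exact ⟨1, one_mem _, J, subset_rfl, fun γ hγ _ _ ↦ by simpa using hγ, by simpa using hker⟩
    obtain ⟨v, hv, hne⟩ := hker
    obtain ⟨l, hl⟩ := Finsupp.ne_iff.mp hne
    obtain ⟨u, hu, J₁, hJ₁, hred⟩ := exists_supported_of_apply_eq_zero
      (finite_negRoots_orbitSum c N l) ⟨v, hv, hl⟩
    obtain ⟨u', hu', J', hJ', hred', hker'⟩ := ih J₁ hJ₁ (u * c * u⁻¹)
    have hle : parabolic cs (J₁ : Set B) ≤ parabolic cs J :=
      Subgroup.closure_mono (Set.image_mono (Finset.coe_subset.mpr hJ₁.subset))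
    refine ⟨u' * u, mul_mem (hle hu') hu, J', hJ'.trans hJ₁.subset, fun γ hγ hroot hzero ↦ ?_,
      fun w hw ↦ ?_⟩
    · rw [geomRep_mul_apply]
      refine hred' _ (hred γ hγ hroot (by simp [hzero])) (hroot.geomRep_apply u) ?_
      rw [orbitSum_conj, geomRep_inv_apply_self, hzero, map_zero]
    · have h := hker' w hw
      rw [orbitSum_conj, ← map_zero (geomRep cs u)] at h
      rw [mul_inv_rev, geomRep_mul_apply]
      exact geomRep_apply_injective cs u h

theorem mem_of_orbitSum_eq_zero {c : W} {N : ℕ} (hN : N ≠ 0) {U : Submodule ℝ (B →₀ ℝ)}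
    (hU : ∀ v, geomRep cs c v - v ∈ U) {v : B →₀ ℝ} (hv : orbitSum cs c N v = 0) : v ∈ U := by
  have hpow (n : ℕ) : (geomRep cs c ^ n) v - v ∈ U := by
    induction n with
    | zero => simp
    | succ n ih =>
      rw [pow_succ', Module.End.mul_apply]
      simpa using add_mem (hU ((geomRep cs c ^ n) v)) ih
  have hsum : orbitSum cs c N v - (N : ℝ) • v ∈ U := by
    simpa [orbitSum, Nat.cast_smul_eq_nsmul] using
      sum_mem (t := Finset.range N) fun n _ ↦ hpow n
  rw [hv, zero_sub, neg_mem_iff] at hsum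
  exact (U.smul_mem_iff (by exact_mod_cast hN)).mp hsum

theorem card_le_card_of_orbitSum_eq_zero {c : W} {N : ℕ} (hN : N ≠ 0) {S : Finset (B →₀ ℝ)}
    (hS : ∀ v, geomRep cs c v - v ∈ Submodule.span ℝ (S : Set (B →₀ ℝ))) {J : Finset B} {u : W}
    (hJ : ∀ v ∈ Finsupp.supported ℝ ℝ (J : Set B), orbitSum cs c N (geomRep cs u v) = 0) :
    J.card ≤ S.card := by
  have hli : LinearIndependent ℝ fun i : J ↦ geomRep cs u (simpleRoot (i : B)) :=
    ((Finsupp.linearIndependent_single_one ℝ B).comp _ Subtype.val_injective).map'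
      _ (LinearMap.ker_eq_bot.mpr (geomRep_apply_injective cs u))
  have hmem : Set.range (fun i : J ↦ geomRep cs u (simpleRoot (i : B))) ≤
      Submodule.span ℝ (S : Set (B →₀ ℝ)) := by
    rintro - ⟨i, rfl⟩
    exact mem_of_orbitSum_eq_zero hN hS (hJ _ (Finsupp.single_mem_supported ℝ _ i.2))
  simpa using linearIndependent_le_span' _ hli _ hmem

end ParabolicReduction

section RankTwo

open Polynomial Chebyshev

namespace IsUnitPair

variable {E F : Type*} [AddCommGroup E] [Module ℝ E] [AddCommGroup F] [Module ℝ F]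
  {Φ : LinearMap.BilinForm ℝ E} {c : ℝ} {a b : E}

theorem map_eq_zero_of_map_rotation (h : IsUnitPair Φ c a b) (hc : 1 - c ^ 2 ≠ 0) {e : E →ₗ[ℝ] F}
    (he : ∀ v, e (unitReflection Φ a (unitReflection Φ b v)) = e v) : e a = 0 ∧ e b = 0 := by
  have hra : unitReflection Φ a (unitReflection Φ b a) = (4 * c ^ 2 - 1) • a + (2 * c) • b := by
    simp only [unitReflection_apply, map_sub, map_smul, h.left_self, h.left_right,
      h.right_left]
    module
  have hrb : unitReflection Φ a (unitReflection Φ b b) = (-(2 * c)) • a - b := by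
    simp only [unitReflection_apply, map_sub, map_smul, h.right_self, h.left_right]
    module
  have hea := he a
  have heb := he b
  rw [hra, map_add, map_smul, map_smul] at hea
  rw [hrb, map_sub, map_smul] at heb
  have hb : e b = (-c) • e a := by linear_combination (norm := module) (-(1 / 2 : ℝ)) • heb
  have ha : (1 - c ^ 2) • e a = 0 := by
    rw [hb] at hea
    linear_combination (norm := module) (-(1 / 2 : ℝ)) • hea
  rw [hb, (smul_eq_zero.mp ha).resolve_left hc, smul_zero]
  exact ⟨rfl, rfl⟩

theorem rotation_sub_mem_span (a b v : E) :
    unitReflection Φ a (unitReflection Φ b v) - v ∈ Submodule.span ℝ {a, b} := by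
  rw [Submodule.mem_span_pair]
  refine ⟨-(2 * Φ a (unitReflection Φ b v)), -(2 * Φ b v), ?_⟩
  rw [unitReflection_apply Φ a, unitReflection_apply Φ b]
  module

theorem ne_smul (h : IsUnitPair Φ c a b) (hc : 1 - c ^ 2 ≠ 0) (μ : ℝ) : b ≠ μ • a := by
  rintro rfl
  have hμ : μ = -c := by simpa [h.left_self] using h.left_right
  have hsq : μ * μ = 1 := by simpa [h.left_self] using h.right_self
  exact hc (by linear_combination (μ - c) * hμ - hsq)

theorem geomRep_apply {a b : B →₀ ℝ} (h : IsUnitPair (geomForm M) c a b) (cs : CoxeterSystem M W)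
    (w : W) : IsUnitPair (geomForm M) c (geomRep cs w a) (geomRep cs w b) where
  left_self := (geomForm_geomRep cs w a a).trans h.left_self
  right_self := (geomForm_geomRep cs w b b).trans h.right_self
  left_right := (geomForm_geomRep cs w a b).trans h.left_right
  right_left := (geomForm_geomRep cs w b a).trans h.right_left

end IsUnitPair

theorem one_sub_cos_pi_div_sq_pos {N : ℕ} (hN : 2 ≤ N) : 0 < 1 - Real.cos (Real.pi / N) ^ 2 := by
  rw [← Real.sin_sq]
  exact pow_pos (sin_pi_div_pos hN) 2

namespace IsRoot

variable {a b γ : B →₀ ℝ}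

theorem exists_geomRep_eq_unitReflection (hγ : IsRoot cs γ) :
    ∃ t, geomRep cs t = unitReflection (geomForm M) γ := by
  obtain ⟨w, i, rfl⟩ := hγ
  exact ⟨_, geomRep_conj_simple cs w i⟩

theorem eq_or_eq_neg_of_eq_smul (ha : IsRoot cs a) (hb : IsRoot cs b) {μ : ℝ} (h : b = μ • a) :
    ∃ ε : ℤˣ, b = ε • a := by
  rcases eq_or_eq_neg_of_form_self_eq_one ha.geomForm_self hb.geomForm_self h with h | h
  · exact ⟨1, by rw [h, one_smul]⟩
  · exact ⟨-1, by rw [h, Units.neg_smul, one_smul]⟩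

theorem exists_mem_parabolic_eq_smul_simpleRoot (hγ : IsRoot cs γ) {J : Finset B}
    (hJ : γ ∈ Finsupp.supported ℝ ℝ (J : Set B)) :
    ∃ u ∈ parabolic cs J, ∃ l ∈ J, ∃ ε : ℤˣ, geomRep cs u γ = ε • simpleRoot l := by
  obtain ⟨t, ht⟩ := hγ.exists_geomRep_eq_unitReflection
  obtain ⟨u, hu, J', hJ', hred, hker⟩ := exists_supported_of_orbitSum_eq_zero (cs := cs) t 2 J
  have hsum : orbitSum cs t 2 γ = 0 := by
    simp only [orbitSum, Finset.sum_range_succ, Finset.sum_range_zero, pow_zero, pow_one, ht,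
      LinearMap.add_apply, zero_add, Module.End.one_apply, unitReflection_apply, hγ.geomForm_self]
    module
  have huγ := hred γ hJ hγ hsum
  have hcard : J'.card ≤ 1 := by
    refine card_le_card_of_orbitSum_eq_zero (S := {γ}) two_ne_zero (fun v ↦ ?_) hker
    rw [ht, Finset.coe_singleton, Submodule.mem_span_singleton, unitReflection_apply]
    exact ⟨-(2 * geomForm M γ v), by module⟩
  obtain ⟨l, hl⟩ : J'.Nonempty := by
    by_contra! hempty
    rw [hempty, Finset.coe_empty, Finsupp.supported_empty, Submodule.mem_bot] at huγ
    exact (hγ.geomRep_apply u).ne_zero huγ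
  obtain rfl : J' = {l} := Finset.eq_singleton_iff_unique_mem.mpr
    ⟨hl, fun j hj ↦ Finset.card_le_one.mp hcard j hj l hl⟩
  have heq := (sum_smul_simpleRoot_of_mem_supported huγ).symm
  rw [Finset.sum_singleton] at heq
  exact ⟨u, hu, l, hJ' hl,
    (isRoot_simpleRoot l).eq_or_eq_neg_of_eq_smul (hγ.geomRep_apply u) heq⟩

theorem exists_supported_card_le_two (ha : IsRoot cs a) (hb : IsRoot cs b) {N : ℕ} (hN : 2 ≤ N)
    (hab : IsUnitPair (geomForm M) (Real.cos (Real.pi / N)) a b) :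
    ∃ x, ∃ J : Finset B, J.card ≤ 2 ∧ geomRep cs x a ∈ Finsupp.supported ℝ ℝ (J : Set B) ∧
      geomRep cs x b ∈ Finsupp.supported ℝ ℝ (J : Set B) := by
  obtain ⟨s, hs⟩ := ha.exists_geomRep_eq_unitReflection
  obtain ⟨t, ht⟩ := hb.exists_geomRep_eq_unitReflection
  have hrot (v) : geomRep cs (s * t) v =
      unitReflection (geomForm M) a (unitReflection (geomForm M) b v) := by
    rw [geomRep_mul_apply, hs, ht]
  have hpow : geomRep cs (s * t) ^ N = 1 := by rw [map_mul, hs, ht, hab.rotation_pow_eq_one hN]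
  obtain ⟨hzeroa, hzerob⟩ := hab.map_eq_zero_of_map_rotation (one_sub_cos_pi_div_sq_pos hN).ne'
    (e := orbitSum cs (s * t) N) fun v ↦ by rw [← hrot, orbitSum_geomRep hpow]
  obtain ⟨x, -, J, -, hred, hker⟩ :=
    exists_supported_of_orbitSum_eq_zero (cs := cs) (s * t) N (a.support ∪ b.support)
  have hcard : J.card ≤ ({a, b} : Finset (B →₀ ℝ)).card := by
    refine card_le_card_of_orbitSum_eq_zero (by lia) (fun v ↦ ?_) hker
    rw [hrot, Finset.coe_pair]
    exact IsUnitPair.rotation_sub_mem_span a b v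
  refine ⟨x, J, hcard.trans Finset.card_le_two, hred a ?_ ha hzeroa, hred b ?_ hb hzerob⟩
  · exact (Finsupp.mem_supported ℝ a).mpr (by simp)
  · exact (Finsupp.mem_supported ℝ b).mpr (by simp)

theorem exists_simpleRoot_pair (ha : IsRoot cs a) (hb : IsRoot cs b) {N : ℕ} (hN : 2 ≤ N)
    (hab : IsUnitPair (geomForm M) (Real.cos (Real.pi / N)) a b) :
    ∃ x i j, i ≠ j ∧ (∃ ε : ℤˣ, geomRep cs x a = ε • simpleRoot i) ∧
      geomRep cs x b ∈ Finsupp.supported ℝ ℝ (({i, j} : Finset B) : Set B) := by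
  obtain ⟨x, J, hcard, hxa, hxb⟩ := ha.exists_supported_card_le_two hb hN hab
  obtain ⟨u, hu, i, hi, ε, hε⟩ :=
    (ha.geomRep_apply x).exists_mem_parabolic_eq_smul_simpleRoot hxa
  have hub := geomRep_mem_supported hu hxb
  rw [← geomRep_mul_apply] at hε hub
  obtain ⟨j, hj, hij⟩ : ∃ j ∈ J, j ≠ i := by
    by_contra! hJ
    obtain rfl := Finset.eq_singleton_iff_unique_mem.mpr ⟨hi, hJ⟩
    have hsmul := (sum_smul_simpleRoot_of_mem_supported hub).symm
    rw [Finset.sum_singleton, ← inv_smul_eq_iff.mpr hε, smul_comm, ← smul_assoc] at hsmul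
    exact (hab.geomRep_apply cs (u * x)).ne_smul (one_sub_cos_pi_div_sq_pos hN).ne' _ hsmul
  obtain rfl : {i, j} = J := Finset.eq_of_subset_of_card_le (by simp [Finset.insert_subset_iff, *])
    (by rwa [Finset.card_pair hij.symm])
  exact ⟨u * x, i, j, hij.symm, ⟨ε, hε⟩, hub⟩

end IsRoot

theorem geomRep_simple_left_dihedralVec (cs : CoxeterSystem M W) (i j : B) (n : ℤ) :
    geomRep cs (cs.simple i)
        (dihedralVec (Real.cos (Real.pi / M i j)) (simpleRoot i) (simpleRoot j) n) =
      -dihedralVec (Real.cos (Real.pi / M i j)) (simpleRoot i) (simpleRoot j) (-n) := by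
  rw [geomRep_simple, (isUnitPair_simpleRoot M i j).reflection_left_dihedralVec,
    eq_neg_iff_add_eq_zero, ← neg_neg (dihedralVec _ _ _ (n - 1)), ← dihedralVec_neg_sub_one,
    neg_add_eq_zero]
  congr 1
  ring

theorem geomRep_simple_right_dihedralVec (cs : CoxeterSystem M W) (i j : B) (n : ℤ) :
    geomRep cs (cs.simple j)
        (dihedralVec (Real.cos (Real.pi / M i j)) (simpleRoot i) (simpleRoot j) n) =
      -dihedralVec (Real.cos (Real.pi / M i j)) (simpleRoot i) (simpleRoot j) (-n - 2) := by
  rw [geomRep_simple, (isUnitPair_simpleRoot M i j).reflection_right_dihedralVec,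
    eq_neg_iff_add_eq_zero, ← neg_neg (dihedralVec _ _ _ (n + 1)), ← dihedralVec_neg_sub_one,
    neg_add_eq_zero]
  congr 1
  ring

theorem IsRoot.exists_eq_smul_dihedralVec {γ : B →₀ ℝ} (hγ : IsRoot cs γ) {i j : B}
    (hij : γ ∈ Finsupp.supported ℝ ℝ (({i, j} : Finset B) : Set B)) :
    ∃ (δ : ℤˣ) (n : ℤ),
      γ = δ • dihedralVec (Real.cos (Real.pi / M i j)) (simpleRoot i) (simpleRoot j) n := by
  obtain ⟨u, hu, l, hl, ε, hε⟩ := hγ.exists_mem_parabolic_eq_smul_simpleRoot hij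
  rw [← geomRep_inv_apply_self cs u γ]
  refine geomRep_mem_of_mem_parabolic (X := {v | ∃ (δ : ℤˣ) (n : ℤ), v = δ •
    dihedralVec (Real.cos (Real.pi / M i j)) (simpleRoot i) (simpleRoot j) n}) ?_ (inv_mem hu) ?_
  · rintro l hl - ⟨δ, n, rfl⟩
    rw [LinearMap.map_smul_of_tower]
    rcases Finset.mem_insert.mp hl with rfl | hl
    · exact ⟨-δ, -n, by rw [geomRep_simple_left_dihedralVec, smul_neg, Units.neg_smul]⟩
    · rw [Finset.mem_singleton.mp hl]
      exact ⟨-δ, -n - 2, by rw [geomRep_simple_right_dihedralVec, smul_neg, Units.neg_smul]⟩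
  · rw [hε]
    rcases Finset.mem_insert.mp hl with rfl | hl
    · exact ⟨ε, 0, by rw [dihedralVec_zero]⟩
    · rw [Finset.mem_singleton.mp hl]
      exact ⟨-ε, -1, by rw [dihedralVec_neg_one, smul_neg, Units.neg_smul, neg_neg]⟩

theorem dihedralVec_add_intCast_mul {E : Type*} [AddCommGroup E] [Module ℝ E] {m : ℕ} (hm : 2 ≤ m)
    (a b : E) (n z : ℤ) :
    dihedralVec (Real.cos (Real.pi / m)) a b (n + z * m) =
      z.negOnePow • dihedralVec (Real.cos (Real.pi / m)) a b n := by
  induction z using Int.induction_on with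
  | zero => simp
  | succ z ih =>
    rw [Int.negOnePow_succ, Units.neg_smul, ← ih, ← dihedralVec_add_natCast hm]
    congr 1
    ring
  | pred z ih =>
    have h := dihedralVec_add_natCast hm a b (n + (-z - 1) * m)
    rw [Int.negOnePow_sub, Int.negOnePow_one, mul_neg_one, Units.neg_smul, ← ih,
      eq_neg_iff_add_eq_zero, ← neg_eq_iff_add_eq_zero, ← h]
    congr 1
    ring

theorem exists_eq_mul_of_cos_sq_eq {m N : ℕ} (hm : m ≠ 0) (hN : N ≠ 0) {n : ℤ}
    (h : Real.cos (n * (Real.pi / m)) ^ 2 = Real.cos (Real.pi / N) ^ 2) :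
    ∃ (e : ℕ) (z : ℤ), m = (e + 1) * N ∧ (n = e + 1 + z * m ∨ n = -(e + 1) + z * m) := by
  rw [Real.cos_sq, Real.cos_sq (Real.pi / N), add_right_inj, div_left_inj' two_ne_zero,
    Real.cos_eq_cos_iff] at h
  have hm' : (m : ℝ) ≠ 0 := mod_cast hm
  have hN' : (N : ℝ) ≠ 0 := mod_cast hN
  obtain ⟨d, z, hd, hn⟩ : ∃ d z : ℤ, (m : ℤ) = d * N ∧ (n = d + z * m ∨ n = -d + z * m) := by
    obtain ⟨z, hz | hz⟩ := h
    · refine ⟨z * m + n, -z, ?_, Or.inl (by ring)⟩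
      field_simp at hz
      exact_mod_cast (by linear_combination hz : (m : ℝ) = (z * m + n) * N)
    · refine ⟨z * m - n, z, ?_, Or.inr (by ring)⟩
      field_simp at hz
      exact_mod_cast (by linear_combination hz : (m : ℝ) = (z * m - n) * N)
  have hpos : 0 < d := by
    by_contra! hle
    have := mul_nonpos_of_nonpos_of_nonneg hle (Int.natCast_nonneg N)
    lia
  obtain ⟨e, rfl⟩ : ∃ e : ℕ, d = e + 1 := ⟨(d - 1).toNat, by lia⟩
  exact ⟨e, z, mod_cast hd, hn⟩

theorem sq_form_smul_dihedralVec {E : Type*} [AddCommGroup E] [Module ℝ E]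
    {Φ : LinearMap.BilinForm ℝ E} {c : ℝ} {a b : E} (h : IsUnitPair Φ c a b) (ε δ : ℤˣ) (n : ℤ) :
    Φ (ε • a) (δ • dihedralVec c a b n) ^ 2 = (T ℝ n).eval c ^ 2 := by
  rw [← h.form_left_dihedralVec]
  rcases Int.units_eq_one_or ε with rfl | rfl <;> rcases Int.units_eq_one_or δ with rfl | rfl <;>
    simp [Units.neg_smul]

theorem exists_eq_mul_of_eval_T_sq_eq {i j : B} (hij : i ≠ j) {N : ℕ} (hN : 2 ≤ N) {n : ℤ}
    (h : (T ℝ n).eval (Real.cos (Real.pi / M i j)) ^ 2 = Real.cos (Real.pi / N) ^ 2) :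
    2 ≤ M i j ∧ ∃ (e : ℕ) (z : ℤ), M i j = (e + 1) * N ∧
      (n = e + 1 + z * M i j ∨ n = -(e + 1) + z * M i j) := by
  have h0 : M i j ≠ 0 := by
    intro h0
    refine (one_sub_cos_pi_div_sq_pos hN).ne' ?_
    rw [← h, h0]
    simp
  refine ⟨two_le_coxeterMatrix hij h0, exists_eq_mul_of_cos_sq_eq h0 (by lia) ?_⟩
  rw [← h, T_real_cos]

/-- Combined with a translation by `M i j`, which changes only the sign, the reflection `s_i`
moves the index `n` of `dihedralVec` to `-(e + 1)`. -/
theorem IsRoot.exists_altProd_pair {a b : B →₀ ℝ} (ha : IsRoot cs a) (hb : IsRoot cs b) {N : ℕ}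
    (hN : 2 ≤ N) (hab : IsUnitPair (geomForm M) (Real.cos (Real.pi / N)) a b) :
    ∃ y i j e, i ≠ j ∧ M i j = (e + 1) * N ∧
      (∃ ε : ℤˣ, geomRep cs y a = ε • simpleRoot i) ∧
      ∃ δ : ℤˣ, geomRep cs y b =
        δ • geomRep cs (altProd cs j i e) (simpleRoot (altNext j i e)) := by
  obtain ⟨x, i, j, hij, ⟨ε, hε⟩, hsupp⟩ := ha.exists_simpleRoot_pair hb hN hab
  obtain ⟨δ, n, hδ⟩ := (hb.geomRep_apply x).exists_eq_smul_dihedralVec hsupp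
  have hT := sq_form_smul_dihedralVec (isUnitPair_simpleRoot M i j) ε δ n
  rw [← hε, ← hδ, geomForm_geomRep, hab.left_right, neg_sq] at hT
  obtain ⟨hM, e, z, hMe, hn⟩ := exists_eq_mul_of_eval_T_sq_eq hij hN hT.symm
  have hroot : dihedralVec (Real.cos (Real.pi / M i j)) (simpleRoot i) (simpleRoot j) (-(e + 1)) =
      -geomRep cs (altProd cs j i e) (simpleRoot (altNext j i e)) := by
    rw [geomRep_altProd, M.symmetric j i, neg_add', dihedralVec_neg_sub_one]
  rcases hn with rfl | rfl
  · refine ⟨cs.simple i * x, i, j, e, hij, hMe, ⟨-ε, ?_⟩, δ * z.negOnePow, ?_⟩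
    · rw [geomRep_mul_apply, hε, LinearMap.map_smul_of_tower, geomRep_simple_simpleRoot, smul_neg,
        Units.neg_smul]
    · rw [geomRep_mul_apply, hδ, dihedralVec_add_intCast_mul hM, LinearMap.map_smul_of_tower,
        LinearMap.map_smul_of_tower, geomRep_simple_left_dihedralVec, hroot, neg_neg, mul_smul]
  · refine ⟨x, i, j, e, hij, hMe, ⟨ε, hε⟩, -(δ * z.negOnePow), ?_⟩
    rw [hδ, dihedralVec_add_intCast_mul hM, hroot, smul_neg, smul_neg, Units.neg_smul, mul_smul]

end RankTwo

section QuantumNumbers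

theorem qX_natCast (n : ℕ) : qX n = (qPair n).1 := by simp [qX]

theorem qY_natCast (n : ℕ) : qY n = (qPair n).2 := by simp [qY]

theorem qX_natCast_add_two (n : ℕ) : qX (n + 2) = varX * qY (n + 1) - qX n := by
  have h := qX_natCast (n + 2)
  rw [qPair, ← qX_natCast, ← qY_natCast] at h
  exact_mod_cast h

theorem qY_natCast_add_two (n : ℕ) : qY (n + 2) = varY * qX (n + 1) - qY n := by
  have h := qY_natCast (n + 2)
  rw [qPair, ← qX_natCast, ← qY_natCast] at h
  exact_mod_cast h

theorem qX_zero : qX 0 = 0 := qX_natCast 0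

theorem qY_zero : qY 0 = 0 := qY_natCast 0

theorem qX_one : qX 1 = 1 := qX_natCast 1

theorem qY_one : qY 1 = 1 := qY_natCast 1

theorem pev_sub (a b : k) (p q : A2) : pev a b (p - q) = pev a b p - pev a b q :=
  map_sub _ p q

theorem pev_qX_add_two (a b : k) (n : ℕ) :
    pev a b (qX (n + 2)) = a * pev a b (qY (n + 1)) - pev a b (qX n) := by
  simp [qX_natCast_add_two, pev, varX]

theorem pev_qY_add_two (a b : k) (n : ℕ) :
    pev a b (qY (n + 2)) = b * pev a b (qX (n + 1)) - pev a b (qY n) := by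
  simp [qY_natCast_add_two, pev, varY]

theorem pev_swap_qX (a b : k) (n : ℕ) :
    pev b a (qX n) = pev a b (qY n) ∧ pev b a (qY n) = pev a b (qX n) := by
  induction n using Nat.twoStepInduction with
  | zero => simp [qX_zero, qY_zero, pev]
  | one => simp [qX_one, qY_one, pev]
  | more n ih ih' =>
    push_cast at ih' ⊢
    rw [pev_qX_add_two, pev_qY_add_two, pev_qX_add_two, pev_qY_add_two, ih.1, ih.2, ih'.1, ih'.2]
    exact ⟨rfl, rfl⟩

end QuantumNumbers

section Transfer

open Polynomial Chebyshev

theorem eval_U_cos_pi_div_pos {m n : ℕ} (h : m = 0 ∨ n + 1 < m) :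
    0 < (U ℝ n).eval (Real.cos (Real.pi / m)) := by
  rcases h with rfl | hn
  · simpa using n.cast_add_one_pos
  · have hm : 2 ≤ m := by lia
    have hlt : (n + 1) * (Real.pi / m) < Real.pi := by
      rw [mul_div_left_comm]
      refine mul_lt_of_lt_one_right Real.pi_pos ((div_lt_one (by positivity)).mpr ?_)
      exact_mod_cast hn
    rw [eval_U_cos_eq_div (sin_pi_div_pos hm).ne']
    exact div_pos (Real.sin_pos_of_pos_of_lt_pi (by positivity) (by exact_mod_cast hlt))
      (sin_pi_div_pos hm)

theorem eq_zero_of_add_eq_simpleRoot {x y : B →₀ ℝ} (hx : 0 ≤ x) (hy : 0 ≤ y) {t : B}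
    (h : x + y = simpleRoot t) {l : B} (hl : l ≠ t) : x l = 0 := by
  have hsum : x l + y l = 0 := by
    simpa [simpleRoot, Finsupp.single_apply, hl.symm] using DFunLike.congr_fun h l
  exact ((add_eq_zero_iff_of_nonneg (hx l) (hy l)).mp hsum).1

theorem IsRoot.eq_of_smul_add_smul_eq_simpleRoot {a b : B →₀ ℝ} (ha : IsRoot cs a)
    (hb : IsRoot cs b) (ha0 : 0 ≤ a) (hb0 : 0 ≤ b) {p q : ℝ} (hp : 0 < p) (hq : 0 < q) {t : B}
    (h : p • a + q • b = simpleRoot t) : a = b := by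
  have hpa := smul_nonneg hp.le ha0
  have hqb := smul_nonneg hq.le hb0
  have hat : a = simpleRoot t := ha.eq_simpleRoot_of_nonneg ha0 fun l hl ↦
    (smul_eq_zero_iff_right hp.ne').mp (eq_zero_of_add_eq_simpleRoot hpa hqb h hl)
  have hbt : b = simpleRoot t := hb.eq_simpleRoot_of_nonneg hb0 fun l hl ↦
    (smul_eq_zero_iff_right hq.ne').mp
      (eq_zero_of_add_eq_simpleRoot hqb hpa ((add_comm _ _).trans h) hl)
  rw [hat, hbt]

theorem exists_eq_mul_altProd_of_geomRep_eq_simpleRoot {w : W} (hw : w ≠ 1) {i t : B}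
    (h : geomRep cs w (simpleRoot i) = simpleRoot t) :
    ∃ v p q n, p ≠ q ∧ M p q = n + 1 ∧ w = v * altProd cs p q n ∧ altNext p q n = i ∧
      cs.length v < cs.length w ∧ geomRep cs v (simpleRoot q) = simpleRoot t := by
  have hi : ¬cs.IsRightDescent w i := fun hdesc ↦
    (isRoot_simpleRoot (cs := cs) t).not_nonpos (by simp [simpleRoot])
      (h ▸ geomRep_simpleRoot_nonpos cs hdesc)
  obtain ⟨v, p, q, n, hpq, rfl, rfl, hn, hlen, hM, hvp, hvq⟩ := exists_eq_mul_altProd cs hi hw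
  rw [geomRep_mul_apply, geomRep_altProd] at h
  have hMn : M p q = n + 1 := by
    by_contra hne
    have hn' : (U ℝ ((n : ℤ) - 1)) = U ℝ ((n - 1 : ℕ) : ℤ) := by rw [Nat.cast_pred hn]
    rw [dihedralVec, map_add, map_smul, map_smul, hn'] at h
    have heq := IsRoot.eq_of_smul_add_smul_eq_simpleRoot (cs := cs) ⟨v, p, rfl⟩ ⟨v, q, rfl⟩
      (geomRep_simpleRoot_nonneg cs hvp) (geomRep_simpleRoot_nonneg cs hvq)
      (eval_U_cos_pi_div_pos (by lia)) (eval_U_cos_pi_div_pos (by lia)) h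
    exact hpq (Finsupp.single_left_injective one_ne_zero (geomRep_apply_injective cs v heq))
  refine ⟨v, p, q, n, hpq, hMn, rfl, rfl, by lia, ?_⟩
  have hidx : (n : ℤ) = -1 + M p q := by
    rw [hMn]
    push_cast
    ring
  rwa [hidx, dihedralVec_add_natCast (two_le_coxeterMatrix hpq (by lia)), dihedralVec_neg_one,
    neg_neg] at h

/-- A family of vectors on which the simple reflections act through the matrix `A`. Both the simple
roots and the simple coroots of a realization are of this kind, for transposed matrices. -/
structure IsCartanFamily {E : Type*} [AddCommGroup E] [Module k E] (cs : CoxeterSystem M W)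
    (ρ : W →* Module.End k E) (A : B → B → k) (x : B → E) : Prop where
  self (i : B) : A i i = 2
  map_simple (i j : B) : ρ (cs.simple i) (x j) = x j - A i j • x i

/-- The two-colored quantum number `[m_{ij}]_x` vanishes at the Cartan entries `(a_{ij}, a_{ji})`
for every finite `m_{ij}`; the value `M i j = 0` encodes `m_{ij} = ∞`. -/
def QuantumVanishing (M : CoxeterMatrix B) (A : B → B → k) : Prop :=
  ∀ i j, i ≠ j → M i j ≠ 0 → pev (A i j) (A j i) (qX (M i j)) = 0

namespace IsCartanFamily

variable {E : Type*} [AddCommGroup E] [Module k E] {ρ : W →* Module.End k E} {A : B → B → k}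
  {x : B → E}

theorem map_simple_self (h : IsCartanFamily cs ρ A x) (i : B) : ρ (cs.simple i) (x i) = -x i := by
  rw [h.map_simple, h.self]
  module

theorem map_altProd (h : IsCartanFamily cs ρ A x) (i j : B) (n : ℕ) :
    ρ (altProd cs i j n) (x (altNext i j n)) = (-1 : k) ^ n •
      (pev (A i j) (A j i) (qX (n + 1)) • x i - pev (A i j) (A j i) (qY n) • x j) := by
  induction n generalizing i j with
  | zero => simp [altProd, altNext, qX_one, qY_zero, pev]
  | succ n ih =>
    have hswap := (pev_swap_qX (A i j) (A j i) (n + 1)).1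
    push_cast at hswap ⊢
    rw [altProd, altNext, map_mul, Module.End.mul_apply, ih, map_smul, map_sub, map_smul, map_smul,
      h.map_simple_self, h.map_simple, hswap, (pev_swap_qX _ _ n).2, add_assoc, one_add_one_eq_two,
      pev_qX_add_two]
    module

theorem exists_map_eq_smul (h : IsCartanFamily cs ρ A x) (hA : QuantumVanishing M A) {w : W}
    {i t : B} (hw : geomRep cs w (simpleRoot i) = simpleRoot t) :
    ∃ κ : k, ρ w (x i) = κ • x t := by
  induction hl : cs.length w using Nat.strong_induction_on generalizing w i with
  | _ l ih =>
    subst hl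
    rcases eq_or_ne w 1 with rfl | hne
    · rw [map_one, Module.End.one_apply] at hw
      exact ⟨1, by rw [Finsupp.single_left_injective one_ne_zero hw]; simp⟩
    obtain ⟨v, p, q, n, hpq, hM, rfl, rfl, hlt, hv⟩ :=
      exists_eq_mul_altProd_of_geomRep_eq_simpleRoot hne hw
    obtain ⟨κ, hκ⟩ := ih _ hlt hv rfl
    have hzero := hA p q hpq (by lia)
    rw [hM, Nat.cast_add_one] at hzero
    refine ⟨-((-1) ^ n * pev (A p q) (A q p) (qY n) * κ), ?_⟩
    rw [map_mul, Module.End.mul_apply, h.map_altProd, hzero, zero_smul, zero_sub, map_smul, map_neg,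
      map_smul, hκ]
    module

end IsCartanFamily

namespace PreRealization

/-- The contragredient representation, whose underlying action is `dAct`. -/
def dualRep (R : PreRealization cs k V) : W →* Module.End k (Module.Dual k V) where
  toFun w := LinearMap.lcomp k k (R.rep w⁻¹)
  map_one' := by
    ext
    simp
  map_mul' u v := by
    ext
    simp

variable (R : PreRealization cs k V)

theorem dualRep_apply (w : W) (f : Module.Dual k V) (v : V) : R.dualRep w f v = f (R.rep w⁻¹ v) :=
  rfl

theorem dualRep_rep (w : W) (f : Module.Dual k V) (v : V) : R.dualRep w f (R.rep w v) = f v := by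
  rw [dualRep_apply, ← Module.End.mul_apply, ← map_mul, inv_mul_cancel, map_one,
    Module.End.one_apply]

theorem isCartanFamily_coroot :
    IsCartanFamily cs R.rep (fun i j ↦ cartanS R j i) R.coroot where
  self := R.root_coroot_eq_two
  map_simple i j := R.rep_simple i (R.coroot j)

theorem isCartanFamily_root : IsCartanFamily cs R.dualRep (cartanS R) R.root where
  self := R.root_coroot_eq_two
  map_simple i j := by
    ext v
    rw [dualRep_apply, cs.inv_simple, R.rep_simple]
    simp [cartanS, mul_comm]

end PreRealization

end Transfer

section CartanEntries

namespace PreRealization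

variable {R : PreRealization cs k V}

/-- The equality `w s_i w⁻¹ = s_t`, evaluated on vectors, determines the coroot from the root. -/
theorem exists_unit_of_geomRep_eq_simpleRoot (hR : QuantumVanishing M (cartanS R)) {w : W} {i t : B}
    (hw : geomRep cs w (simpleRoot i) = simpleRoot t) :
    ∃ κ : kˣ, R.dualRep w (R.root i) = κ • R.root t ∧
      R.rep w (R.coroot i) = κ⁻¹ • R.coroot t := by
  obtain ⟨κ, hκ⟩ := R.isCartanFamily_root.exists_map_eq_smul hR hw
  obtain ⟨x, hx⟩ := R.root_surjective i 1
  have hunit : κ * R.root t (R.rep w x) = 1 := by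
    rw [← smul_eq_mul, ← LinearMap.smul_apply, ← hκ, dualRep_rep, hx]
  have hconj : w * cs.simple i * w⁻¹ = cs.simple t := by
    simpa using (conj_simple_eq_iff cs (v := w) (w := 1) (i := i) (j := t)).mpr
      (.inl (by simp [hw]))
  have hcoroot : κ • R.rep w (R.coroot i) = R.coroot t := by
    obtain ⟨y, hy⟩ := R.root_surjective t 1
    have h := R.rep_simple t y
    rw [← hconj, map_mul, map_mul, Module.End.mul_apply, Module.End.mul_apply, R.rep_simple,
      map_sub, map_smul, ← dualRep_apply, hκ, ← Module.End.mul_apply, ← map_mul, mul_inv_cancel,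
      map_one, Module.End.one_apply, LinearMap.smul_apply, hy, smul_eq_mul, mul_one, one_smul] at h
    exact sub_right_injective h
  refine ⟨Units.mkOfMulEqOne _ _ hunit, hκ, ?_⟩
  rw [eq_inv_smul_iff]
  exact hcoroot

theorem exists_unit_of_geomRep_eq_smul (hR : QuantumVanishing M (cartanS R)) {v w : W} {i t : B}
    {ε : ℤˣ} (h : geomRep cs v (simpleRoot i) = ε • geomRep cs w (simpleRoot t)) :
    ∃ κ : kˣ, R.dualRep v (R.root i) = κ • R.dualRep w (R.root t) ∧
      R.rep v (R.coroot i) = κ⁻¹ • R.rep w (R.coroot t) := by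
  have hpos {v : W} (h : geomRep cs v (simpleRoot i) = geomRep cs w (simpleRoot t)) :
      ∃ κ : kˣ, R.dualRep v (R.root i) = κ • R.dualRep w (R.root t) ∧
        R.rep v (R.coroot i) = κ⁻¹ • R.rep w (R.coroot t) := by
    obtain ⟨κ, hroot, hcoroot⟩ := exists_unit_of_geomRep_eq_simpleRoot hR (w := w⁻¹ * v) (i := i)
      (t := t) (by rw [geomRep_mul_apply, h, geomRep_inv_apply_self])
    refine ⟨κ, ?_, ?_⟩
    · rw [← LinearMap.map_smul_of_tower, ← hroot, ← Module.End.mul_apply, ← map_mul,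
        mul_inv_cancel_left]
    · rw [← LinearMap.map_smul_of_tower, ← hcoroot, ← Module.End.mul_apply, ← map_mul,
        mul_inv_cancel_left]
  rcases Int.units_eq_one_or ε with rfl | rfl
  · exact hpos (by rw [h, one_smul])
  · obtain ⟨κ, hroot, hcoroot⟩ := hpos (v := v * cs.simple i)
      (by rw [geomRep_mul_simple_simpleRoot, h, Units.neg_smul, one_smul, neg_neg])
    rw [map_mul, Module.End.mul_apply, R.isCartanFamily_root.map_simple_self, map_neg,
      neg_eq_iff_eq_neg] at hroot
    rw [map_mul, Module.End.mul_apply, R.isCartanFamily_coroot.map_simple_self, map_neg,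
      neg_eq_iff_eq_neg] at hcoroot
    refine ⟨-κ, hroot.trans (neg_smul (κ : k) _).symm, ?_⟩
    rw [hcoroot, inv_neg]
    exact (neg_smul (↑κ⁻¹ : k) _).symm

theorem dualRep_altProd_root_apply_coroot (R : PreRealization cs k V) (i j : B) (n : ℕ) :
    R.dualRep (altProd cs j i n) (R.root (altNext j i n)) (R.coroot i) =
      (-1) ^ n * pev (cartanS R i j) (cartanS R j i) (twX (n + 1)) := by
  have hqY := (pev_swap_qX (cartanS R i j) (cartanS R j i) (n + 1)).1
  have hqX := (pev_swap_qX (cartanS R i j) (cartanS R j i) n).2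
  have hrec := pev_qX_add_two (cartanS R i j) (cartanS R j i) n
  push_cast at hqY
  rw [R.isCartanFamily_root.map_altProd, hqY, hqX]
  simp only [LinearMap.smul_apply, LinearMap.sub_apply, smul_eq_mul, R.root_coroot_eq_two]
  rw [twX, add_assoc, one_add_one_eq_two, add_sub_cancel_right, pev_sub, hrec]
  simp only [cartanS]
  ring

theorem root_apply_rep_altProd_coroot (R : PreRealization cs k V) (i j : B) (n : ℕ) :
    R.root i (R.rep (altProd cs j i n) (R.coroot (altNext j i n))) =
      (-1) ^ n * pev (cartanS R i j) (cartanS R j i) (twY (n + 1)) := by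
  have hrec := pev_qY_add_two (cartanS R i j) (cartanS R j i) n
  rw [R.isCartanFamily_coroot.map_altProd]
  simp only [map_smul, map_sub, smul_eq_mul, R.root_coroot_eq_two]
  rw [twY, add_assoc, one_add_one_eq_two, add_sub_cancel_right, pev_sub, hrec]
  simp only [cartanS]
  ring

theorem exists_pairing_eq_unit_mul (hR : QuantumVanishing M (cartanS R)) {v w : W} {p q : B} {N : ℕ}
    (hN : 2 ≤ N) (h : IsUnitPair (geomForm M) (Real.cos (Real.pi / N))
      (geomRep cs v (simpleRoot p)) (geomRep cs w (simpleRoot q))) :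
    ∃ i j e, ∃ u : kˣ, i ≠ j ∧ M i j = (e + 1) * N ∧
      R.dualRep w (R.root q) (R.rep v (R.coroot p)) =
        u * pev (cartanS R i j) (cartanS R j i) (twX (e + 1)) ∧
      R.dualRep v (R.root p) (R.rep w (R.coroot q)) =
        ↑u⁻¹ * pev (cartanS R i j) (cartanS R j i) (twY (e + 1)) := by
  obtain ⟨y, i, j, e, hij, hM, ⟨ε, hε⟩, δ, hδ⟩ :=
    IsRoot.exists_altProd_pair (cs := cs) ⟨v, p, rfl⟩ ⟨w, q, rfl⟩ hN h
  rw [← geomRep_mul_apply] at hε hδ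
  obtain ⟨κ, hκroot, hκcoroot⟩ := exists_unit_of_geomRep_eq_smul hR (v := y * v) (i := p)
    (w := 1) (t := i) (ε := ε) (by rw [hε, map_one, Module.End.one_apply])
  obtain ⟨μ, hμroot, hμcoroot⟩ := exists_unit_of_geomRep_eq_smul hR hδ
  have hmove (v w : W) (f : Module.Dual k V) (x : V) :
      R.dualRep w f (R.rep v x) = R.dualRep (y * w) f (R.rep (y * v) x) := by
    rw [map_mul, map_mul, Module.End.mul_apply, Module.End.mul_apply, dualRep_rep]
  rw [map_one, Module.End.one_apply] at hκroot hκcoroot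
  refine ⟨i, j, e, μ * κ⁻¹ * (-1) ^ e, hij, hM, ?_, ?_⟩
  · rw [hmove, hμroot, hκcoroot, LinearMap.smul_apply, LinearMap.map_smul_of_tower,
      dualRep_altProd_root_apply_coroot]
    simp only [Units.smul_def, smul_eq_mul]
    push_cast
    ring
  · rw [hmove, hκroot, hμcoroot, LinearMap.smul_apply, LinearMap.map_smul_of_tower,
      root_apply_rep_altProd_coroot]
    simp only [Units.smul_def, smul_eq_mul]
    rw [mul_inv, mul_inv, inv_inv, ← inv_pow, inv_neg_one]
    push_cast
    ring

end PreRealization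

end CartanEntries

section Scaling

open MvPolynomial

theorem aeval_zpow_smul_of_isWeightedHomogeneous {σ : Type*} {w : σ → ℤ} {p : MvPolynomial σ ℤ}
    {d : ℤ} (hp : IsWeightedHomogeneous w p d) (u : kˣ) (a : σ → k) :
    aeval (fun i ↦ u ^ w i • a i) p = u ^ d • aeval a p := by
  simp only [aeval_def, eval₂_eq, Finset.smul_sum]
  refine Finset.sum_congr rfl fun m hm ↦ ?_
  have hunit : ∏ i ∈ m.support, (u ^ w i) ^ m i = u ^ d := by
    have h := map_prod (zpowersHom kˣ u) (fun i ↦ .ofAdd (m i • w i)) m.support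
    rw [← ofAdd_sum, zpowersHom_apply, toAdd_ofAdd] at h
    rw [← hp (mem_support_iff.mp hm), Finsupp.weight_apply, Finsupp.sum, h]
    simp only [zpowersHom_apply, toAdd_ofAdd, nsmul_eq_mul, mul_comm (_ : ℤ), zpow_mul,
      zpow_natCast]
  simp only [Units.smul_def, smul_eq_mul, mul_pow, Finset.prod_mul_distrib, ← hunit]
  push_cast
  ring

attribute [local instance] MvPolynomial.weightedGradedAlgebra in
theorem isWeightedHomogeneous_of_mul {σ ι R : Type*} [CommRing R] [IsDomain R]
    [AddCancelCommMonoid ι] {w : σ → ι} {p q : MvPolynomial σ R} {m n : ι}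
    (hpq : IsWeightedHomogeneous w (p * q) (m + n)) (hq : IsWeightedHomogeneous w q n)
    (hq0 : q ≠ 0) : IsWeightedHomogeneous w p m := by
  intro d hd
  have hcomponent : weightedHomogeneousComponent w (Finsupp.weight w d + n) (p * q) =
      weightedHomogeneousComponent w (Finsupp.weight w d) p * q := by
    simp_rw [← weightedDecomposition.decompose'_apply]
    exact DirectSum.coe_decompose_mul_add_of_right_mem (weightedHomogeneousSubmodule R w) hq
  have hne : weightedHomogeneousComponent w (Finsupp.weight w d) p ≠ 0 := fun h0 ↦ hd <| by
    rw [← coeff_zero d, ← h0, coeff_weightedHomogeneousComponent, if_pos rfl]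
  by_contra hdm
  refine mul_ne_zero hne hq0 ?_
  rw [← hcomponent, hpq.weightedHomogeneousComponent_ne]
  exact fun h ↦ hdm (add_right_cancel h)

/-- The weights of the grading of `ℤ[x,y]` by powers of `u` under `x ↦ u x`, `y ↦ u⁻¹ y`. All
two-colored quantum numbers and binomial coefficients are homogeneous for it. -/
abbrev xyWeight : Fin 2 → ℤ := ![1, -1]

theorem isWeightedHomogeneous_qX_qY (n : ℕ) :
    IsWeightedHomogeneous xyWeight (qX n) (if Even n then 1 else 0) ∧
      IsWeightedHomogeneous xyWeight (qY n) (if Even n then -1 else 0) := by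
  have hx : IsWeightedHomogeneous xyWeight varX 1 := isWeightedHomogeneous_X ℤ _ 0
  have hy : IsWeightedHomogeneous xyWeight varY (-1) := isWeightedHomogeneous_X ℤ _ 1
  induction n using Nat.twoStepInduction with
  | zero => simp [qX_zero, qY_zero, isWeightedHomogeneous_zero]
  | one => simp [qX_one, qY_one, isWeightedHomogeneous_one]
  | more n ih ih' =>
    push_cast
    rw [qX_natCast_add_two, qY_natCast_add_two]
    have hparity : (if Even (n + 2) then 1 else 0 : ℤ) = 1 + if Even (n + 1) then -1 else 0 := by
      by_cases h : Even n <;> simp [h, Nat.even_add_one]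
    have hparity' : (if Even (n + 2) then -1 else 0 : ℤ) = -1 + if Even (n + 1) then 1 else 0 := by
      by_cases h : Even n <;> simp [h, Nat.even_add_one]
    constructor
    · refine .sub ?_ (by simpa [Nat.even_add_one] using ih.1)
      rw [hparity]
      exact hx.mul (mod_cast ih'.2)
    · refine .sub ?_ (by simpa [Nat.even_add_one] using ih.2)
      rw [hparity']
      exact hy.mul (mod_cast ih'.1)

theorem pev_two_two_qX_qY (n : ℕ) : pev 2 2 (qX n) = (n : ℤ) ∧ pev 2 2 (qY n) = (n : ℤ) := by
  induction n using Nat.twoStepInduction with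
  | zero => simp [qX_zero, qY_zero, pev]
  | one => simp [qX_one, qY_one, pev]
  | more n ih ih' =>
    push_cast at ih' ⊢
    rw [pev_qX_add_two, pev_qY_add_two, ih.1, ih.2, ih'.1, ih'.2]
    constructor <;> ring

theorem qX_ne_zero {n : ℕ} (hn : n ≠ 0) : qX n ≠ 0 := fun h ↦ by
  simpa [h, pev, hn, eq_comm] using (pev_two_two_qX_qY n).1

theorem qY_ne_zero {n : ℕ} (hn : n ≠ 0) : qY n ≠ 0 := fun h ↦ by
  simpa [h, pev, hn, eq_comm] using (pev_two_two_qX_qY n).2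

theorem pev_unit_mul_of_isWeightedHomogeneous {p : A2} {d : ℤ}
    (hp : IsWeightedHomogeneous xyWeight p d) (u : kˣ) (a b : k) :
    pev (u * a) (↑u⁻¹ * b) p = ↑(u ^ d) * pev a b p := by
  have hpoint : ![(u : k) * a, ↑u⁻¹ * b] = fun i ↦ u ^ xyWeight i • ![a, b] i := by
    ext i
    fin_cases i <;> simp [Units.smul_def]
  rw [pev, hpoint, aeval_zpow_smul_of_isWeightedHomogeneous hp, Units.smul_def, smul_eq_mul, pev]

theorem exists_isWeightedHomogeneous_of_mul_prod_eq_prod {q : ℕ → A2} {d : ℕ → ℤ}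
    (hq : ∀ n, IsWeightedHomogeneous xyWeight (q n) (d n)) (hq0 : ∀ n, n ≠ 0 → q n ≠ 0)
    {p : A2} {n j : ℕ}
    (hp : p * ∏ i ∈ Finset.range j, q (i + 1) = ∏ i ∈ Finset.range j, q (n - i)) :
    ∃ e, IsWeightedHomogeneous xyWeight p e := by
  have hprod (f : ℕ → ℕ) := IsWeightedHomogeneous.prod (Finset.range j) (fun i ↦ q (f i))
    (fun i ↦ d (f i)) fun i _ ↦ hq (f i)
  refine ⟨_, isWeightedHomogeneous_of_mul (n := ∑ i ∈ Finset.range j, d (i + 1))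
    (m := ∑ i ∈ Finset.range j, d (n - i) - ∑ i ∈ Finset.range j, d (i + 1)) ?_ (hprod (· + 1)) ?_⟩
  · rw [hp, sub_add_cancel]
    exact hprod (n - ·)
  · exact Finset.prod_ne_zero_iff.mpr fun i _ ↦ hq0 _ i.succ_ne_zero

theorem exists_isWeightedHomogeneous_qbinomX {n j : ℕ} (hj : j ≤ n) :
    ∃ d, IsWeightedHomogeneous xyWeight (qbinomX n j) d := by
  rw [qbinomX]
  split_ifs with h
  · refine exists_isWeightedHomogeneous_of_mul_prod_eq_prod (q := fun n ↦ qX n)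
      (fun n ↦ (isWeightedHomogeneous_qX_qY n).1) (fun _ ↦ qX_ne_zero) (n := n) (j := j) ?_
    push_cast
    rw [h.choose_spec]
    refine Finset.prod_congr rfl fun i hi ↦ ?_
    rw [Nat.cast_sub ((Finset.mem_range.mp hi).le.trans hj)]
  · exact ⟨0, isWeightedHomogeneous_zero ..⟩

theorem exists_isWeightedHomogeneous_qbinomY {n j : ℕ} (hj : j ≤ n) :
    ∃ d, IsWeightedHomogeneous xyWeight (qbinomY n j) d := by
  rw [qbinomY]
  split_ifs with h
  · refine exists_isWeightedHomogeneous_of_mul_prod_eq_prod (q := fun n ↦ qY n)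
      (fun n ↦ (isWeightedHomogeneous_qX_qY n).2) (fun _ ↦ qY_ne_zero) (n := n) (j := j) ?_
    push_cast
    rw [h.choose_spec]
    refine Finset.prod_congr rfl fun i hi ↦ ?_
    rw [Nat.cast_sub ((Finset.mem_range.mp hi).le.trans hj)]
  · exact ⟨0, isWeightedHomogeneous_zero ..⟩

theorem pev_twist (a b : k) (d : ℤ) (p : A2) :
    pev a b (twist d p) = pev (pev a b (twX d)) (pev a b (twY d)) p := by
  rw [pev, twist, comp_aeval_apply, pev]
  congr 2
  ext i
  fin_cases i <;> rfl

theorem pev_unit_mul_twist_eq_zero {p : A2} {d : ℤ}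
    (hp : IsWeightedHomogeneous xyWeight p d) (u : kˣ) {a b : k} {e : ℤ}
    (h : pev a b (twist e p) = 0) :
    pev (u * pev a b (twX e)) (↑u⁻¹ * pev a b (twY e)) p = 0 := by
  rw [pev_unit_mul_of_isWeightedHomogeneous hp, ← pev_twist, h, mul_zero]

end Scaling

section ReflectionSubgroups

theorem twist_one (p : A2) : twist 1 p = p := by
  have hx : twX 1 = varX := by
    simpa [twX, qX_zero, qY_one] using qX_natCast_add_two 0
  have hy : twY 1 = varY := by
    simpa [twY, qY_zero, qX_one] using qY_natCast_add_two 0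
  have hid : ![varX, varY] = (MvPolynomial.X : Fin 2 → A2) := by
    ext1 i
    fin_cases i <;> rfl
  rw [twist, hx, hy, hid, MvPolynomial.aeval_X_left, AlgHom.id_apply]

theorem qbinomX_one_right (n : ℕ) : qbinomX n 1 = qX n := by
  have h : ∃ p : A2, p * ∏ i ∈ Finset.range 1, qX (i + 1) = ∏ i ∈ Finset.range 1, qX (n - i) :=
    ⟨qX n, by simp [qX_one]⟩
  rw [qbinomX, dif_pos h]
  simp [qX_one]

theorem ReflectionStable.quantumVanishing {R : PreRealization cs k V} (hR : ReflectionStable cs R) :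
    QuantumVanishing M (cartanS R) := fun i j hij h0 ↦ by
  have hord := orderOf_simple_mul_simple cs hij h0
  have h1 : M i j ≠ 1 := M.off_diagonal i j hij
  have h := (hR i j hij (by rwa [hord]) (M i j) (by lia) hord.symm.dvd 1 le_rfl (by lia)).1
  rwa [hord, Nat.div_self (by lia), Nat.cast_one, twist_one, qbinomX_one_right] at h

namespace IsReflectionDatum

variable {W' : Subgroup W} {wm : W → W} {rm : W → B} {s' t' : W}

theorem geomRep_eq_unitReflection {A : Set W} {t : W} (hd : IsReflectionDatum cs A wm rm)
    (ht : t ∈ A) :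
    geomRep cs t = unitReflection (geomForm M) (geomRep cs (wm t) (simpleRoot (rm t))) := by
  rw [← geomRep_conj_simple, ← (hd t ht).1]

theorem isCanonicalRoot (hd : IsReflectionDatum cs (canonicalGens cs (W' : Set W)) wm rm)
    (hs : s' ∈ canonicalGens cs (W' : Set W)) :
    IsCanonicalRoot cs W' (geomRep cs (wm s') (simpleRoot (rm s'))) := by
  obtain ⟨heq, hlen⟩ := hd s' hs
  exact ⟨geomRep_simpleRoot_nonneg cs hlen.not_gt, wm s', rm s', rfl, heq ▸ hs⟩

theorem isUnitPair_cos_pi_div_orderOf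
    (hd : IsReflectionDatum cs (canonicalGens cs (W' : Set W)) wm rm)
    (hs : s' ∈ canonicalGens cs (W' : Set W)) (ht : t' ∈ canonicalGens cs (W' : Set W))
    (hne : s' ≠ t') (hfin : orderOf (s' * t') ≠ 0) :
    2 ≤ orderOf (s' * t') ∧
      IsUnitPair (geomForm M) (Real.cos (Real.pi / orderOf (s' * t')))
        (geomRep cs (wm s') (simpleRoot (rm s'))) (geomRep cs (wm t') (simpleRoot (rm t'))) := by
  have hmul := congrArg₂ (· * ·) (hd.geomRep_eq_unitReflection hs) (hd.geomRep_eq_unitReflection ht)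
  rw [← map_mul] at hmul
  obtain ⟨N, hN, hpair⟩ := (hd.isCanonicalRoot hs).exists_isUnitPair_cos_pi_div
    (hd.isCanonicalRoot ht)
    (fun h ↦ hne <| geomRep_injective cs <| by
      rw [hd.geomRep_eq_unitReflection hs, hd.geomRep_eq_unitReflection ht, h])
    (Nat.pos_of_ne_zero hfin) (by rw [← hmul, ← map_pow, pow_orderOf_eq_one, map_one])
  have horder : orderOf (s' * t') = N := by
    rw [← orderOf_injective (geomRep cs) (geomRep_injective cs), hmul, hpair.orderOf_rotation hN]
  exact horder ▸ ⟨hN, hpair⟩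

end IsReflectionDatum

theorem statement_12_general (cs : CoxeterSystem M W) (R : PreRealization cs k V)
    (hR : ReflectionStable cs R) (W' : Subgroup W) (wm : W → W) (rm : W → B)
    (hd : IsReflectionDatum cs (canonicalGens cs (W' : Set W)) wm rm) (s' : W)
    (hs : s' ∈ canonicalGens cs (W' : Set W)) (t' : W) (ht : t' ∈ canonicalGens cs (W' : Set W))
    (hne : s' ≠ t') (hfin : orderOf (s' * t') ≠ 0) (j : ℕ) (hj : 1 ≤ j)
    (hj' : j ≤ orderOf (s' * t') - 1) :
    pev (cartan R wm rm s' t') (cartan R wm rm t' s') (qbinomX (orderOf (s' * t')) j) = 0 ∧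
      pev (cartan R wm rm s' t') (cartan R wm rm t' s') (qbinomY (orderOf (s' * t')) j) = 0 := by
  obtain ⟨hN, hpair⟩ := hd.isUnitPair_cos_pi_div_orderOf hs ht hne hfin
  obtain ⟨p, q, e, u, hpq, hM, hst, hts⟩ :=
    PreRealization.exists_pairing_eq_unit_mul hR.quantumVanishing hN hpair
  have hMpq : orderOf (cs.simple p * cs.simple q) = (e + 1) * orderOf (s' * t') := by
    rw [orderOf_simple_mul_simple cs hpq (by rw [hM]; positivity), hM]
  obtain ⟨hX, hY⟩ := hR p q hpq (by rw [hMpq]; positivity) _ hN (hMpq ▸ dvd_mul_left _ _) j hj hj'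
  rw [hMpq, Nat.mul_div_cancel _ (Nat.pos_of_ne_zero hfin), Nat.cast_add_one] at hX hY
  have hjle : j ≤ orderOf (s' * t') := hj'.trans (Nat.sub_le _ _)
  obtain ⟨_, hwX⟩ := exists_isWeightedHomogeneous_qbinomX hjle
  obtain ⟨_, hwY⟩ := exists_isWeightedHomogeneous_qbinomY hjle
  have hcartan : cartan R wm rm s' t' = _ ∧ cartan R wm rm t' s' = _ := ⟨hst, hts⟩
  rw [hcartan.1, hcartan.2]
  exact ⟨pev_unit_mul_twist_eq_zero hwX u hX, pev_unit_mul_twist_eq_zero hwY u hY⟩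

end ReflectionSubgroups

theorem statement_12 [IsDomain k] [Module.Free k V] [Module.Finite k V]
    (cs : CoxeterSystem M W) (R : PreRealization cs k V)
    (hR : ReflectionStable cs R)
    (W' : Subgroup W) (hW' : IsReflectionSubgroup cs W') :
    ∀ (wm : W → W) (rm : W → B),
      IsReflectionDatum cs (canonicalGens cs (W' : Set W)) wm rm →
      ∀ s' ∈ canonicalGens cs (W' : Set W), ∀ t' ∈ canonicalGens cs (W' : Set W),
        s' ≠ t' → orderOf (s' * t') ≠ 0 →
        ∀ j : ℕ, 1 ≤ j → j ≤ orderOf (s' * t') - 1 →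
          pev (cartan R wm rm s' t') (cartan R wm rm t' s')
              (qbinomX (orderOf (s' * t')) j) = 0 ∧
          pev (cartan R wm rm s' t') (cartan R wm rm t' s')
              (qbinomY (orderOf (s' * t')) j) = 0 :=
  statement_12_general cs R hR W'

end PaperStmt
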